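/- Suppose μ_r is a simple eigenvalue of Σ. Then b_r(Σ) = −A_r(Σ)/(2n) + β_r, where A_r(Σ) := 2∑_{s≠r} μ_r μ_s m_s/(μ_r − μ_s)², and the remainder satisfies |β_r| ≤ C (‖Σ‖³/g_r³)(√(r(Σ)/n) ∨ r(Σ)/n)³ for an absolute constant C > 0. -/

import Mathlib

open MeasureTheory ProbabilityTheory Filter Set
open scoped RealInnerProductSpace Topology NNReal ENNReal

noncomputable section

namespace KLN

variable {H : Type*} [NormedAddCommGroup H] [InnerProductSpace ℝ H] [CompleteSpace H]

/-- Rank-one operator `x ⊗ y : w ↦ ⟪y, w⟫ • x`. -/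
def outer (x y : H) : H →L[ℝ] H := (innerSL ℝ y).smulRight x

/-- Sample covariance of the sample `X`. -/
def sampleCov {n : ℕ} (X : Fin n → H) : H →L[ℝ] H :=
  (n : ℝ)⁻¹ • ∑ j : Fin n, outer (X j) (X j)

/-- Courant–Fischer: `lam A j` is the `(j+1)`-th largest eigenvalue of the
positive self-adjoint compact operator `A` (eigenvalues repeated with multiplicity). -/
def lam (A : H →L[ℝ] H) (j : ℕ) : ℝ :=
  ⨆ V : {V : Submodule ℝ H // Module.finrank ℝ V = j + 1},
    ⨅ x : {x : H // x ∈ V.1 ∧ ‖x‖ = 1}, ⟪A x.1, x.1⟫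

/-- `λ_δ(A) := max {λ ∈ A : (λ-δ, λ) ∩ A = ∅}`. -/
def lamDelta (δ : ℝ) (A : Set ℝ) : ℝ := sSup {l | l ∈ A ∧ Ioo (l - δ) l ∩ A = ∅}

/-- Top δ-cluster `T_δ(A) := A \ [0, λ_δ(A))`. -/
def topCluster (δ : ℝ) (A : Set ℝ) : Set ℝ := A \ Ico 0 (lamDelta δ A)

/-- Successive residual sets after removing top clusters. -/
def resid (δ : ℝ) (A : Set ℝ) : ℕ → Set ℝ
  | 0 => A
  | k + 1 => resid δ A k \ topCluster δ (resid δ A k)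

/-- `cluster δ A k` is the `(k+1)`-th δ-cluster `A_{k+1}` of `A`. -/
def cluster (δ : ℝ) (A : Set ℝ) (k : ℕ) : Set ℝ := topCluster δ (resid δ A k)

/-- The number of δ-clusters: `ν := min {j : A_{j+1} = ∅}`. -/
def nClusters (δ : ℝ) (A : Set ℝ) : ℕ := sInf {j | cluster δ A j = ∅}

/-- `σ(A) ∪ {0}`. -/
def spec0 (A : H →L[ℝ] H) : Set ℝ := spectrum ℝ A ∪ {0}

/-- Direct sum of the eigenspaces of `A` for eigenvalues in `c`. -/
def clusterSpace (A : H →L[ℝ] H) (c : Set ℝ) : Submodule ℝ H :=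
  ⨆ t ∈ c, Module.End.eigenspace (A : H →ₗ[ℝ] H) t

/-- `A` is self-adjoint, positive and nuclear (trace class). -/
def IsPosNuclear (A : H →L[ℝ] H) : Prop :=
  (∀ x y : H, ⟪A x, y⟫ = ⟪x, A y⟫) ∧ (∀ x : H, 0 ≤ ⟪A x, x⟫) ∧
    ∃ (ι : Type) (e : HilbertBasis ι ℝ H), Summable fun i => ⟪A (e i), e i⟫

/-- Nuclear norm of a self-adjoint `A`: `‖A‖₁ = ∑_j √(λ_j(A∘A))`. -/
def nuclearNormSA (A : H →L[ℝ] H) : ℝ := ∑' j, Real.sqrt (lam (A.comp A) j)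

/-- A covariance operator together with its spectral decomposition
`Σ = ∑_s μ_s P_s` where `μ 0 > μ 1 > ⋯ > 0` are the distinct eigenvalues (0-indexed;
zero projections `P s = 0` are allowed so that finite rank operators are covered)
and `P s` are the (finite rank, mutually orthogonal) spectral projections. -/
structure CovOp (H : Type*) [NormedAddCommGroup H] [InnerProductSpace ℝ H]
    [CompleteSpace H] where
  toCLM : H →L[ℝ] H
  μ : ℕ → ℝ
  P : ℕ → H →L[ℝ] H
  μ_pos : ∀ s, 0 < μ s
  μ_anti : StrictAnti μ
  μ_lim : Tendsto μ atTop (nhds 0)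
  P_symm : ∀ s (x y : H), ⟪P s x, y⟫ = ⟪x, P s y⟫
  P_idem : ∀ s (x : H), P s (P s x) = P s x
  P_orth : ∀ s t, s ≠ t → ∀ x : H, P s (P t x) = 0
  P_finrank : ∀ s, FiniteDimensional ℝ (LinearMap.range (P s).toLinearMap)
  μm_summable : Summable fun s =>
    μ s * (Module.finrank ℝ (LinearMap.range (P s).toLinearMap) : ℝ)
  decomp : ∀ x : H, HasSum (fun s => μ s • P s x) (toCLM x)

namespace CovOp

/-- multiplicity `m_s` of `μ s`. -/
def m (S : CovOp H) (s : ℕ) : ℕ :=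
  Module.finrank ℝ (LinearMap.range (S.P s).toLinearMap)

/-- `tr(Σ) = ∑_s μ_s m_s`. -/
def trace (S : CovOp H) : ℝ := ∑' s, S.μ s * (S.m s : ℝ)

/-- effective rank `r(Σ) = tr(Σ)/‖Σ‖`. -/
def effRank (S : CovOp H) : ℝ := S.trace / ‖S.toCLM‖

/-- spectral gap `g_r = dist(μ_r, σ(Σ) \ {μ_r})`. -/
def g (S : CovOp H) (r : ℕ) : ℝ :=
  Metric.infDist (S.μ r) (spectrum ℝ S.toCLM \ {S.μ r})

/-- `ḡ_r = min_{s ≤ r} g_s`. -/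
def gbar (S : CovOp H) (r : ℕ) : ℝ := ⨅ s : Fin (r + 1), S.g s

/-- `C_r x = ∑_{s ≠ r} (μ_r - μ_s)⁻¹ P_s x`. -/
def C (S : CovOp H) (r : ℕ) (x : H) : H :=
  ∑' s, (if s = r then 0 else (S.μ r - S.μ s)⁻¹) • S.P s x

/-- `σ_r²(Σ; u) = μ_r ⟨Σ C_r u, C_r u⟩`. -/
def sigmaSq (S : CovOp H) (r : ℕ) (u : H) : ℝ :=
  S.μ r * ⟪S.toCLM (S.C r u), S.C r u⟫

/-- `Δ_r = {j : λ_j(Σ) = μ_r}` (eigenvalues `λ_j` with multiplicities, 0-indexed). -/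
def Delta (S : CovOp H) (r : ℕ) : Set ℕ := {j | lam S.toCLM j = S.μ r}

/-- `μ r` is a simple eigenvalue with (unit) eigenvector `θ`, i.e. `P r = θ ⊗ θ`. -/
def SimpleVec (S : CovOp H) (r : ℕ) (θ : H) : Prop :=
  ‖θ‖ = 1 ∧ ∀ x : H, S.P r x = ⟪θ, x⟫ • θ

/-- `L_r(E) x = P_r E C_r x + C_r E P_r x`, with `P_r = θ ⊗ θ`. -/
def L (S : CovOp H) (r : ℕ) (θ : H) (E : H →L[ℝ] H) (x : H) : H :=
  ⟪θ, E (S.C r x)⟫ • θ + S.C r (E (⟪θ, x⟫ • θ))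

/-- the class `𝒮^{(r)}(rk, a, s0, u)`. -/
def memS (S : CovOp H) (r : ℕ) (u : H) (rk a s0 : ℝ) : Prop :=
  S.effRank ≤ rk ∧ ‖S.toCLM‖ / S.gbar r ≤ a ∧ s0 ^ 2 ≤ S.sigmaSq r u

/-- the open class `𝒮̊^{(r)}(rk, a, s0, u)`. -/
def memSo (S : CovOp H) (r : ℕ) (u : H) (rk a s0 : ℝ) : Prop :=
  S.effRank < rk ∧ ‖S.toCLM‖ / S.gbar r < a ∧ s0 ^ 2 < S.sigmaSq r u

/-- `A_r(Σ) = 2 ∑_{s ≠ r} μ_r μ_s m_s / (μ_r - μ_s)²`. -/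
def Ar (S : CovOp H) (r : ℕ) : ℝ :=
  2 * ∑' s, (if s = r then 0 else S.μ r * S.μ s * (S.m s : ℝ) / (S.μ r - S.μ s) ^ 2)

end CovOp

/-- `ν` is a centered Gaussian measure on `H` with covariance operator `A`. -/
def IsGaussian [MeasurableSpace H] (ν : Measure H) (A : H →L[ℝ] H) : Prop :=
  IsProbabilityMeasure ν ∧
    ∀ u : H, ν.map (fun x => ⟪x, u⟫) = gaussianReal 0 (Real.toNNReal ⟪A u, u⟫)

/-- standard normal distribution function. -/
def Phi (x : ℝ) : ℝ := ((gaussianReal 0 1) (Iic x)).toReal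

/-- `E ℓ(Z)`, `Z` standard normal. -/
def stdGaussExp (f : ℝ → ℝ) : ℝ := ∫ z, f z ∂(gaussianReal 0 1)

/-- Assumption 3.1 on the loss function. -/
structure IsLoss (f : ℝ → ℝ) (c₁ c₂ : ℝ) : Prop where
  c₁_pos : 0 < c₁
  c₂_pos : 0 < c₂
  nonneg : ∀ x, 0 ≤ f x
  zero : f 0 = 0
  even : ∀ x, f (-x) = f x
  mono : MonotoneOn f (Ici 0)
  conv : ConvexOn ℝ (Ici 0) f
  bound : ∀ x, 0 ≤ x → f x ≤ c₁ * Real.exp (c₂ * x)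

/-- the bias parameter `b_r = E⟨θ̂_r, θ_r⟩² - 1` for an estimator `est` based on a
sample of `k` i.i.d. observations from `ν`. -/
def biasParam [MeasurableSpace H] {k : ℕ} (ν : Measure H) (θ : H)
    (est : (Fin k → H) → H) : ℝ :=
  (∫ x, ⟪est x, θ⟫ ^ 2 ∂(Measure.pi fun _ : Fin k => ν)) - 1

/-- `est` is a valid selection of the estimator `θ̂_r^δ` with `δ = τ‖Σ̂‖`: a unit vector,
aligned with `θ`, lying in the direct sum of eigenspaces of `Σ̂` for eigenvalues in the
`r`-th `δ`-cluster of `σ(Σ̂)` (whenever that space is nontrivial). -/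
def clusterSel (r : ℕ) (θ : H) (τ : ℝ) {k : ℕ} (est : (Fin k → H) → H) : Prop :=
  ∀ x : Fin k → H,
    ‖est x‖ = 1 ∧ 0 ≤ ⟪est x, θ⟫ ∧
      (clusterSpace (sampleCov x) (cluster (τ * ‖sampleCov x‖) (spec0 (sampleCov x)) r) ≠ ⊥ →
        est x ∈ clusterSpace (sampleCov x) (cluster (τ * ‖sampleCov x‖) (spec0 (sampleCov x)) r))

/-- `est` is a valid selection of the empirical eigenvector `θ̂_r`: a unit vector, aligned
with `θ`, which is an eigenvector of `Σ̂` for an eigenvalue `λ_j(Σ̂)` with `j ∈ Δ_r`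
(whenever such an eigenvector exists). -/
def eigSel (S : CovOp H) (r : ℕ) (θ : H) {k : ℕ} (est : (Fin k → H) → H) : Prop :=
  ∀ x : Fin k → H,
    ‖est x‖ = 1 ∧ 0 ≤ ⟪est x, θ⟫ ∧
      ((∃ v : H, ‖v‖ = 1 ∧ ∃ j ∈ S.Delta r, sampleCov x v = lam (sampleCov x) j • v) →
        ∃ j ∈ S.Delta r, sampleCov x (est x) = lam (sampleCov x) j • est x)


section


lemma exp_aux (y : ℝ) (h1 : -(1/2) ≤ y) (h2 : y ≤ 1/2) : Real.exp (-y - y^2) ≤ 1 - y := by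
  have key : 1 ≤ (1 - y) * Real.exp (y + y^2) := by
    rcases le_total y 0 with h | h
    · have h3 := Real.add_one_le_exp (y + y^2)
      have : 1 ≤ (1 - y) * (y + y^2 + 1) := by nlinarith [mul_nonneg (sq_nonneg y) (neg_nonneg.2 h)]
      have h4 : (1 - y) * (y + y^2 + 1) ≤ (1 - y) * Real.exp (y + y^2) :=
        mul_le_mul_of_nonneg_left h3 (by linarith)
      linarith
    · have h3 := Real.quadratic_le_exp_of_nonneg (x := y + y^2) (by positivity)
      have h4 : (1 - y) * (1 + (y + y^2) + (y+y^2)^2/2) ≤ (1 - y) * Real.exp (y + y^2) :=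
        mul_le_mul_of_nonneg_left h3 (by linarith)
      have : 1 ≤ (1 - y) * (1 + (y + y^2) + (y+y^2)^2/2) := by
        have e : (1 - y) * (1 + (y + y^2) + (y+y^2)^2/2) - 1 = y^2/2*(1 - y*(1 + y + y^2)) := by ring
        have : y * (1 + y + y^2) ≤ 1 := by nlinarith [sq_nonneg y]
        nlinarith [mul_nonneg (sq_nonneg y) (sub_nonneg.2 this)]
      linarith
  have e1 : Real.exp (-y - y^2) = (Real.exp (y + y^2))⁻¹ := by rw [← Real.exp_neg]; ring_nf
  rw [e1]
  rw [inv_le_iff_one_le_mul₀ (Real.exp_pos _)]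
  exact key

lemma sqrt_aux (t : ℝ) (h1 : -(1/4) ≤ t) (h2 : t ≤ 1/4) :
    (Real.sqrt (1 - 2*t))⁻¹ ≤ Real.exp (t + 2*t^2) := by
  have h := exp_aux (2*t) (by linarith) (by linarith)
  have h3 : Real.exp (-(t + 2*t^2)) ≤ Real.sqrt (1 - 2*t) := by
    apply Real.le_sqrt_of_sq_le
    rw [← Real.exp_nat_mul]
    refine le_trans (le_of_eq ?_) h
    congr 1; push_cast; ring
  rw [Real.exp_neg] at h3
  exact inv_le_of_inv_le₀ (Real.exp_pos _) h3

lemma gauss_exp_sq (t : ℝ) (h2 : t ≤ 1/4) :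
    Integrable (fun x : ℝ => Real.exp (t * x^2)) (gaussianReal 0 1) ∧
    ∫ x, Real.exp (t * x^2) ∂(gaussianReal 0 1) = (Real.sqrt (1 - 2*t))⁻¹ := by
  have hb : 0 < 1/2 - t := by linarith
  have hfun : ∀ x : ℝ, gaussianPDFReal 0 1 x * Real.exp (t * x^2)
      = (Real.sqrt (2 * Real.pi))⁻¹ * Real.exp (-(1/2 - t) * x^2) := by
    intro x
    simp only [gaussianPDFReal, NNReal.coe_one, mul_one, sub_zero]
    rw [mul_assoc, ← Real.exp_add]
    congr 2; ring
  constructor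
  · rw [gaussianReal_of_var_ne_zero 0 one_ne_zero]
    rw [integrable_withDensity_iff_integrable_smul' (measurable_gaussianPDF 0 1)
      (ae_of_all _ fun x => gaussianPDF_lt_top)]
    simp only [toReal_gaussianPDF, smul_eq_mul, hfun]
    exact (integrable_exp_neg_mul_sq hb).const_mul _
  · rw [integral_gaussianReal_eq_integral_smul one_ne_zero]
    simp only [smul_eq_mul, hfun]
    rw [integral_const_mul, integral_gaussian]
    have h3 : Real.pi / (1/2 - t) = (2 * Real.pi) * (1 - 2*t)⁻¹ := by
      have : (1 - 2*t) ≠ 0 := by linarith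
      field_simp
    rw [h3, Real.sqrt_mul (show 0 ≤ 2 * Real.pi by positivity) ((1 - 2*t)⁻¹), Real.sqrt_inv, ← mul_assoc,
      inv_mul_cancel₀ (by positivity), one_mul]

/-- exponential moments for products -/
lemma pi_exp_sq {ι : Type*} [Fintype ι] (a : ι → ℝ) (h1 : ∀ i, -(1/4) ≤ a i) (h2 : ∀ i, a i ≤ 1/4) :
    ∫⁻ g, ENNReal.ofReal (Real.exp (∑ i, a i * (g i)^2)) ∂(Measure.pi fun _ : ι => gaussianReal 0 1)
      ≤ ENNReal.ofReal (Real.exp (∑ i, (a i + 2 * (a i)^2))) := by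
  have hint : Integrable (fun g : ι → ℝ => ∏ i, Real.exp (a i * (g i)^2))
      (Measure.pi fun _ : ι => gaussianReal 0 1) :=
    Integrable.fintype_prod (f := fun i x => Real.exp (a i * x^2))
      (fun i => (gauss_exp_sq (a i) (h2 i)).1)
  simp only [Real.exp_sum]
  rw [← ofReal_integral_eq_lintegral_ofReal hint
    (ae_of_all _ fun g => Finset.prod_nonneg fun i _ => (Real.exp_pos _).le)]
  apply ENNReal.ofReal_le_ofReal
  rw [integral_fintype_prod_eq_prod (f := fun i x => Real.exp (a i * x^2))]
  apply Finset.prod_le_prod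
  · intro i _
    exact integral_nonneg fun x => (Real.exp_pos _).le
  · intro i _
    rw [(gauss_exp_sq (a i) (h2 i)).2]
    exact sqrt_aux _ (h1 i) (h2 i)

lemma pow_le_exp_aux (y : ℝ) (hy : 0 ≤ y) (q : ℕ) : y^q ≤ (q:ℝ)^q * Real.exp y := by
  have h1 := Real.pow_div_factorial_le_exp y hy q
  have h2 : ((Nat.factorial q : ℕ) : ℝ) ≤ (q:ℝ)^q := by exact_mod_cast Nat.factorial_le_pow q
  rw [div_le_iff₀ (by positivity)] at h1
  calc y^q ≤ Real.exp y * (Nat.factorial q : ℕ) := h1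
    _ ≤ Real.exp y * (q:ℝ)^q := mul_le_mul_of_nonneg_left h2 (Real.exp_pos _).le
    _ = _ := mul_comm _ _

/-- moments of weighted chi square -/
lemma chi_weighted {ι : Type*} [Fintype ι] (a : ι → ℝ) (B tr : ℝ) (hB : 0 < B)
    (ha : ∀ i, 0 ≤ a i) (haB : ∀ i, a i ≤ B) (htr : ∑ i, a i ≤ tr) (q : ℕ) :
    ∫⁻ g, ENNReal.ofReal ((∑ i, a i * (g i)^2)^q) ∂(Measure.pi fun _ : ι => gaussianReal 0 1)
      ≤ ENNReal.ofReal ((4 * B * q)^q * Real.exp (tr / B)) := by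
  have hp : ∀ g : ι → ℝ, ENNReal.ofReal ((∑ i, a i * (g i)^2)^q) ≤
      ENNReal.ofReal ((4*B*q)^q) *
        ENNReal.ofReal (Real.exp (∑ i, (a i / (4*B)) * (g i)^2)) := by
    intro g
    rw [← ENNReal.ofReal_mul (by positivity)]
    apply ENNReal.ofReal_le_ofReal
    have hy : 0 ≤ ∑ i, (a i / (4*B)) * (g i)^2 :=
      Finset.sum_nonneg fun i _ => mul_nonneg (div_nonneg (ha i) (by positivity)) (sq_nonneg _)
    have h := pow_le_exp_aux _ hy q
    have e : ∑ i, a i * (g i)^2 = (4*B) * ∑ i, (a i / (4*B)) * (g i)^2 := by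
      rw [Finset.mul_sum]; apply Finset.sum_congr rfl; intro i _; field_simp
    rw [e, mul_pow, mul_pow (4*B), mul_assoc]
    exact mul_le_mul_of_nonneg_left h (by positivity)
  refine (lintegral_mono hp).trans ?_
  rw [lintegral_const_mul _ (by fun_prop), ENNReal.ofReal_mul (by positivity)]
  gcongr
  refine (pi_exp_sq _ (fun i => ?_) (fun i => ?_)).trans ?_
  · have : 0 ≤ a i / (4*B) := div_nonneg (ha i) (by positivity)
    linarith
  · rw [div_le_iff₀ (by positivity)]; linarith [haB i]
  · apply ENNReal.ofReal_le_ofReal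
    apply Real.exp_le_exp.2
    calc ∑ i, (a i / (4*B) + 2 * (a i/(4*B))^2) ≤ ∑ i, a i / B := by
          apply Finset.sum_le_sum; intro i _
          have h1 : a i / (4*B) = (a i / B)/4 := by field_simp
          have h0 : 0 ≤ a i / B := div_nonneg (ha i) hB.le
          have h2 : a i / B ≤ 1 := by rw [div_le_one hB]; exact haB i
          rw [h1]; nlinarith
      _ = (∑ i, a i)/B := by rw [Finset.sum_div]
      _ ≤ tr / B := by gcongr

/-- moments of centered chi square -/
lemma chi_centered (n : ℕ) (q : ℕ) (hq : Even q) (t : ℝ) (ht : 0 < t) (ht4 : t ≤ 1/4) :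
    ∫⁻ g, ENNReal.ofReal ((∑ i, ((g i)^2 - 1))^q) ∂(Measure.pi fun _ : Fin n => gaussianReal 0 1)
      ≤ ENNReal.ofReal ((q / t)^q * (2 * Real.exp (2 * n * t^2))) := by
  have hp : ∀ g : Fin n → ℝ, ENNReal.ofReal ((∑ i, ((g i)^2 - 1))^q) ≤
      ENNReal.ofReal ((q/t)^q * Real.exp (-(n*t))) *
        ENNReal.ofReal (Real.exp (∑ i, t * (g i)^2)) +
      ENNReal.ofReal ((q/t)^q * Real.exp (n*t)) *
        ENNReal.ofReal (Real.exp (∑ i, (-t) * (g i)^2)) := by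
    intro g
    rw [← ENNReal.ofReal_mul (by positivity), ← ENNReal.ofReal_mul (by positivity),
      ← ENNReal.ofReal_add (by positivity) (by positivity)]
    apply ENNReal.ofReal_le_ofReal
    set Y := ∑ i, ((g i)^2 - 1) with hY
    have hYe : Y = ∑ i, (g i)^2 - n := by simp [hY, Finset.sum_sub_distrib]
    have h := pow_le_exp_aux (t * |Y|) (by positivity) q
    have h3 : Real.exp (t * |Y|) ≤ Real.exp (t * Y) + Real.exp (-(t*Y)) := by
      rcases abs_cases Y with ⟨h, _⟩ | ⟨h, _⟩
      · rw [h]; linarith [Real.exp_pos (-(t*Y))]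
      · rw [h, mul_neg]; linarith [Real.exp_pos (t*Y)]
    have h4 : Y^q = (t * |Y|)^q / t^q := by
      rw [mul_pow, hq.pow_abs]; field_simp
    rw [h4, div_le_iff₀ (by positivity)]
    rw [mul_assoc ((q/t)^q), mul_assoc ((q/t)^q), ← Real.exp_add, ← Real.exp_add, ← mul_add,
      ← Finset.mul_sum, ← Finset.mul_sum]
    have e1 : -(n*t) + t * ∑ i, (g i)^2 = t * Y := by rw [hYe]; ring
    have e2 : n*t + -t * ∑ i, (g i)^2 = -(t * Y) := by rw [hYe]; ring
    rw [e1, e2, div_pow]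
    calc (t*|Y|)^q ≤ (q:ℝ)^q * Real.exp (t*|Y|) := h
      _ ≤ (q:ℝ)^q * (Real.exp (t * Y) + Real.exp (-(t*Y))) := by gcongr
      _ = _ := by field_simp
  refine (lintegral_mono hp).trans ?_
  rw [lintegral_add_left (by fun_prop), lintegral_const_mul _ (by fun_prop),
    lintegral_const_mul _ (by fun_prop)]
  have b1 := pi_exp_sq (ι := Fin n) (fun _ => t) (fun _ => by linarith) (fun _ => ht4)
  have b2 := pi_exp_sq (ι := Fin n) (fun _ => -t) (fun _ => by linarith) (fun _ => by linarith)
  refine (add_le_add (mul_le_mul_right b1 _) (mul_le_mul_right b2 _)).trans ?_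
  rw [← ENNReal.ofReal_mul (by positivity), ← ENNReal.ofReal_mul (by positivity),
      ← ENNReal.ofReal_add (by positivity) (by positivity)]
  apply ENNReal.ofReal_le_ofReal
  rw [mul_assoc ((q/t)^q), mul_assoc ((q/t)^q), ← Real.exp_add, ← Real.exp_add, ← mul_add]
  apply le_of_eq
  congr 1
  simp only [Finset.sum_const, Finset.card_univ, Fintype.card_fin, nsmul_eq_mul]
  rw [two_mul (Real.exp _)]
  congr 1 <;> congr 1 <;> ring

end

section

lemma gauss_interval (q : ℕ) (hq : 1 ≤ q) (a : ℝ) (h0 : 0 ≤ a) (ha : a ≤ 2 * Real.sqrt q) :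
    ENNReal.ofReal (Real.exp (-8)^q) ≤ gaussianReal 0 1 (Icc a (a+1)) := by
  rw [gaussianReal_apply 0 one_ne_zero]
  have hle : ∀ x ∈ Icc a (a+1), ENNReal.ofReal (Real.exp (-8)^q) ≤ gaussianPDF 0 1 x := by
    intro x hx
    unfold gaussianPDF
    apply ENNReal.ofReal_le_ofReal
    simp only [gaussianPDFReal, NNReal.coe_one, mul_one, sub_zero]
    have hpi : Real.exp (-1) ≤ (Real.sqrt (2 * Real.pi))⁻¹ := by
      rw [Real.exp_neg]
      apply inv_anti₀ (by positivity)
      rw [Real.sqrt_le_left (Real.exp_pos _).le]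
      have := Real.exp_one_gt_d9
      have := Real.pi_lt_d2
      nlinarith
    have hqq : (1:ℝ) ≤ q := by exact_mod_cast hq
    have hs : Real.sqrt q ^ 2 = q := Real.sq_sqrt (by positivity)
    have hs0 : 1 ≤ Real.sqrt q := by rw [Real.one_le_sqrt]; exact hqq
    have hx2 : x^2 ≤ (2*Real.sqrt q + 1)^2 := by
      apply pow_le_pow_left₀ (h0.trans hx.1); linarith [hx.2]
    calc Real.exp (-8)^q = Real.exp (-1) * Real.exp (-8*q+1) := by
          rw [← Real.exp_nat_mul, ← Real.exp_add]; congr 1; ring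
      _ ≤ (Real.sqrt (2 * Real.pi))⁻¹ * Real.exp (-x^2/2) := by
          gcongr
          nlinarith
  calc ENNReal.ofReal (Real.exp (-8)^q) = ∫⁻ x in Icc a (a+1), ENNReal.ofReal (Real.exp (-8)^q) := by
        simp
    _ ≤ _ := setLIntegral_mono' measurableSet_Icc hle

lemma even_add_pow (q : ℕ) (hq : Even q) (a b : ℝ) : 2 * a^q ≤ (a+b)^q + (a-b)^q := by
  have h := (Even.convexOn_pow hq (𝕜 := ℝ)).2 (mem_univ (a+b)) (mem_univ (a-b))
    (show (0:ℝ) ≤ 1/2 by norm_num) (show (0:ℝ) ≤ 1/2 by norm_num) (by norm_num)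
  simp only [smul_eq_mul] at h
  have e : 1/2*(a+b) + 1/2*(a-b) = a := by ring
  rw [e] at h; linarith

lemma scal_low (q : ℕ) (hq : Even q) (hq2 : 1 ≤ q) (l β γ : ℝ) :
    ENNReal.ofReal ((q * |l| * Real.exp (-8))^q) ≤
      ∫⁻ g, ENNReal.ofReal ((l * g^2 + 2*β*g + γ)^q) ∂(gaussianReal 0 1) := by
  set f : ℝ → ℝ≥0∞ := fun g => ENNReal.ofReal ((l * g^2 + 2*β*g + γ)^q) with hf
  have hfm : Measurable f := by rw [hf]; fun_prop
  have hsym : ∫⁻ g, f (-g) ∂(gaussianReal 0 1) = ∫⁻ g, f g ∂(gaussianReal 0 1) := by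
    rw [← lintegral_map hfm measurable_neg, gaussianReal_map_neg, neg_zero]
  have h2 : 2 * ∫⁻ g, ENNReal.ofReal ((l*g^2+γ)^q) ∂(gaussianReal 0 1) ≤
      2 * ∫⁻ g, f g ∂(gaussianReal 0 1) := by
    rw [two_mul (∫⁻ g, f g ∂_)]
    nth_rewrite 2 [← hsym]
    rw [← lintegral_add_left hfm, ← lintegral_const_mul _ (by fun_prop)]
    apply lintegral_mono
    intro g
    have hh := even_add_pow q hq (l*g^2+γ) (2*β*g)
    simp only [hf]
    rw [← ENNReal.ofReal_add (hq.pow_nonneg _) (hq.pow_nonneg _),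
      show (2:ℝ≥0∞) = ENNReal.ofReal 2 by simp, ← ENNReal.ofReal_mul (by norm_num)]
    apply ENNReal.ofReal_le_ofReal
    convert hh using 3 <;> ring
  have h3 : ∫⁻ g, ENNReal.ofReal ((l*g^2+γ)^q) ∂(gaussianReal 0 1) ≤ ∫⁻ g, f g ∂(gaussianReal 0 1) :=
    (ENNReal.mul_le_mul_iff_right (by norm_num) (by norm_num)).1 h2
  refine le_trans ?_ h3
  have hqq : (1:ℝ) ≤ q := by exact_mod_cast hq2
  have hs : Real.sqrt q ^ 2 = q := Real.sq_sqrt (by positivity)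
  have key : ∃ a, 0 ≤ a ∧ a ≤ 2 * Real.sqrt q ∧ ∀ g ∈ Icc a (a+1), q * |l| ≤ |l*g^2+γ| := by
    have habs := abs_nonneg l
    rcases le_total (2*q*|l|) |γ| with h | h
    · refine ⟨0, le_rfl, by positivity, fun g hg => ?_⟩
      have h1 : |l*g^2+γ| ≥ |γ| - |l*g^2| := by
        have := abs_sub_abs_le_abs_sub γ (-(l*g^2)); rw [abs_neg] at this
        rw [show l*g^2+γ = γ - -(l*g^2) by ring]; exact this
      rw [abs_mul, abs_of_nonneg (sq_nonneg g)] at h1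
      have hg1 : g^2 ≤ 1 := by nlinarith [hg.1, hg.2]
      nlinarith
    · refine ⟨2*Real.sqrt q, by positivity, le_rfl, fun g hg => ?_⟩
      have h1 : |l*g^2+γ| ≥ |l*g^2| - |γ| := by
        have := abs_sub_abs_le_abs_sub (l*g^2) (-γ); rw [abs_neg] at this
        rw [show l*g^2+γ = l*g^2 - -γ by ring]; exact this
      rw [abs_mul, abs_of_nonneg (sq_nonneg g)] at h1
      have hg1 : 4*q ≤ g^2 := by
        have : (2*Real.sqrt q)^2 ≤ g^2 := pow_le_pow_left₀ (by positivity) hg.1 2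
        nlinarith
      nlinarith
  obtain ⟨a, ha0, ha1, hg⟩ := key
  calc ENNReal.ofReal ((q * |l| * Real.exp (-8))^q)
      = ENNReal.ofReal ((q*|l|)^q) * ENNReal.ofReal (Real.exp (-8)^q) := by
        rw [mul_pow, ENNReal.ofReal_mul (by positivity)]
    _ ≤ ENNReal.ofReal ((q*|l|)^q) * gaussianReal 0 1 (Icc a (a+1)) := by
        gcongr; exact gauss_interval q hq2 a ha0 ha1
    _ = ∫⁻ g in Icc a (a+1), ENNReal.ofReal ((q*|l|)^q) ∂(gaussianReal 0 1) := by simp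
    _ ≤ ∫⁻ g in Icc a (a+1), ENNReal.ofReal ((l*g^2+γ)^q) ∂(gaussianReal 0 1) := by
        apply setLIntegral_mono' measurableSet_Icc
        intro g hgm
        apply ENNReal.ofReal_le_ofReal
        rw [← hq.pow_abs (l*g^2+γ)]
        exact pow_le_pow_left₀ (by positivity) (hg g hgm) q
    _ ≤ _ := setLIntegral_le_lintegral _ _

end

section

lemma rot_gauss {V : Type*} [NormedAddCommGroup V] [InnerProductSpace ℝ V] [FiniteDimensional ℝ V]
    [MeasurableSpace V] [BorelSpace V] (c : V) (hc : ‖c‖ = 1) :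
    ((stdGaussian V).prod (gaussianReal 0 1)).map
      (fun p : V × ℝ => p.1 - ⟪c, p.1⟫ • c + p.2 • c) = stdGaussian V := by
  have hm : Measurable (fun p : V × ℝ => p.1 - ⟪c, p.1⟫ • c + p.2 • c) := by fun_prop
  have : IsProbabilityMeasure (((stdGaussian V).prod (gaussianReal 0 1)).map
      (fun p : V × ℝ => p.1 - ⟪c, p.1⟫ • c + p.2 • c)) := Measure.isProbabilityMeasure_map hm.aemeasurable
  apply Measure.ext_of_charFun
  funext t
  rw [charFun_stdGaussian, charFun_apply, integral_map hm.aemeasurable (by fun_prop)]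
  have e : ∀ p : V × ℝ, Complex.exp (↑(inner ℝ (p.1 - ⟪c, p.1⟫ • c + p.2 • c) t) * Complex.I)
      = Complex.exp (↑(inner ℝ p.1 (t - ⟪c,t⟫ • c)) * Complex.I) *
        Complex.exp (↑⟪c,t⟫ * ↑p.2 * Complex.I) := by
    intro p
    rw [← Complex.exp_add]
    congr 1
    simp only [inner_add_left, inner_sub_left, inner_smul_left, inner_sub_right, inner_smul_right,
      real_inner_comm c p.1]
    push_cast
    simp
    ring
  simp_rw [e]
  rw [integral_prod_mul (fun x : V => Complex.exp (↑(inner ℝ x (t - ⟪c,t⟫ • c)) * Complex.I))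
    (fun y : ℝ => Complex.exp (↑⟪c,t⟫ * ↑y * Complex.I)), ← charFun_apply, ← charFun_apply_real,
    charFun_stdGaussian, charFun_gaussianReal, ← Complex.exp_add]
  congr 1
  have h : ‖t - ⟪c,t⟫ • c‖^2 = ‖t‖^2 - ⟪c,t⟫^2 := by
    rw [norm_sub_sq_real, inner_smul_right, norm_smul, hc, real_inner_comm, mul_one, Real.norm_eq_abs,
      sq_abs]
    ring
  have h2 : ((‖t - ⟪c,t⟫ • c‖ : ℝ) : ℂ)^2 = (‖t‖:ℂ)^2 - (⟪c,t⟫:ℂ)^2 := by exact_mod_cast h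
  rw [h2]; push_cast; ring

lemma quad_low {V : Type*} [NormedAddCommGroup V] [InnerProductSpace ℝ V] [FiniteDimensional ℝ V]
    [MeasurableSpace V] [BorelSpace V] {H : Type*} [NormedAddCommGroup H] [InnerProductSpace ℝ H]
    (c : V) (hc : ‖c‖ = 1)
    (A : H →L[ℝ] H) (Φ : V →L[ℝ] H) (q : ℕ) (hq : Even q) (hq2 : 1 ≤ q) :
    ENNReal.ofReal ((q * |⟪A (Φ c), Φ c⟫| * Real.exp (-8))^q) ≤
      ∫⁻ h, ENNReal.ofReal (⟪A (Φ h), Φ h⟫^q) ∂(stdGaussian V) := by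
  have hm : Measurable (fun p : V × ℝ => p.1 - ⟪c, p.1⟫ • c + p.2 • c) := by fun_prop
  have hcont : Continuous fun h : V => ⟪A (Φ h), Φ h⟫^q := by fun_prop
  have hmm : Measurable fun h : V => ENNReal.ofReal (⟪A (Φ h), Φ h⟫^q) :=
    ENNReal.measurable_ofReal.comp hcont.measurable
  rw [← rot_gauss c hc, lintegral_map hmm hm, lintegral_prod _ (by exact (hmm.comp hm).aemeasurable)]
  calc ENNReal.ofReal ((q * |⟪A (Φ c), Φ c⟫| * Real.exp (-8))^q)
      = ∫⁻ h : V, ENNReal.ofReal ((q * |⟪A (Φ c), Φ c⟫| * Real.exp (-8))^q) ∂(stdGaussian V) := by simp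
    _ ≤ _ := by
      apply lintegral_mono
      intro h
      dsimp only
      generalize h - ⟪c,h⟫ • c = w
      refine (scal_low q hq hq2 (⟪A (Φ c), Φ c⟫) ((⟪A (Φ w), Φ c⟫ + ⟪A (Φ c), Φ w⟫)/2)
        ⟪A (Φ w), Φ w⟫).trans (le_of_eq ?_)
      apply lintegral_congr
      intro g
      congr 2
      simp only [map_add, map_smul, inner_add_left, inner_add_right, inner_smul_left, inner_smul_right]
      simp
      ring

lemma quad_low_pi {F : Type*} [Fintype F] {H : Type*} [NormedAddCommGroup H] [InnerProductSpace ℝ H]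
    (e : F → H) (A : H →L[ℝ] H) (c : F → ℝ) (hc : ∑ i, c i ^2 = 1)
    (q : ℕ) (hq : Even q) (hq2 : 1 ≤ q) :
    ENNReal.ofReal ((q * |⟪A (∑ i, c i • e i), ∑ i, c i • e i⟫| * Real.exp (-8))^q) ≤
      ∫⁻ h : F → ℝ, ENNReal.ofReal (⟪A (∑ i, h i • e i), ∑ i, h i • e i⟫^q)
        ∂(Measure.pi fun _ : F => gaussianReal 0 1) := by
  let Φ : EuclideanSpace ℝ F →L[ℝ] H := ∑ i, (EuclideanSpace.proj i).smulRight (e i)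
  have hΦ : ∀ h, Φ h = ∑ i, h i • e i := by
    intro h; simp [Φ]
  have h := quad_low (V := EuclideanSpace ℝ F) (WithLp.toLp 2 c)
    (by rw [EuclideanSpace.norm_eq]; simp [hc]) A Φ q hq hq2
  have hcont : Continuous fun h : EuclideanSpace ℝ F => ⟪A (Φ h), Φ h⟫^q := by fun_prop
  have hmm : Measurable fun h : EuclideanSpace ℝ F => ENNReal.ofReal (⟪A (Φ h), Φ h⟫^q) :=
    ENNReal.measurable_ofReal.comp hcont.measurable
  rw [← map_pi_eq_stdGaussian, lintegral_map hmm (by fun_prop)] at h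
  simpa only [hΦ] using h

end

section

variable {H : Type*} [NormedAddCommGroup H] [InnerProductSpace ℝ H]

lemma sampleCov_inner [CompleteSpace H] {n : ℕ} (x : Fin n → H) (u w : H) :
    ⟪sampleCov x u, w⟫ = (n:ℝ)⁻¹ * ∑ j, ⟪x j, u⟫ * ⟪x j, w⟫ := by
  simp [sampleCov, outer, inner_smul_left, sum_inner]

lemma gauss_scale (v : ℝ) :
    (gaussianReal 0 1).map (fun g => Real.sqrt v * g) = gaussianReal 0 (Real.toNNReal v) := by
  rw [gaussianReal_map_const_mul]
  congr 1
  · simp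
  · ext
    simp only [mul_one, NNReal.coe_mk]
    rcases le_total 0 v with h | h
    · rw [Real.coe_toNNReal _ h]; exact Real.sq_sqrt h
    · rw [Real.sqrt_eq_zero_of_nonpos h, Real.toNNReal_of_nonpos h]; simp

lemma gauss_law [CompleteSpace H] [MeasurableSpace H] [BorelSpace H] {ν : Measure H} {T : H →L[ℝ] H}
    (hν : IsGaussian ν T) (n : ℕ) (u : H) :
    (Measure.pi fun _ : Fin n => ν).map (fun x j => ⟪x j, u⟫) =
      (Measure.pi fun _ : Fin n => gaussianReal 0 1).map (fun g j => Real.sqrt ⟪T u, u⟫ * g j) := by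
  have := hν.1
  have hm : Measurable fun x : H => ⟪x, u⟫ := (by fun_prop : Continuous fun x : H => ⟪x,u⟫).measurable
  have h1 : ∀ i : Fin n, SigmaFinite (Measure.map (fun x : H => ⟪x, u⟫) ν) := by
    intro i; rw [hν.2 u]; infer_instance
  have h2 : ∀ i : Fin n, SigmaFinite (Measure.map (fun g : ℝ => Real.sqrt ⟪T u, u⟫ * g) (gaussianReal 0 1)) := by
    intro i; rw [gauss_scale]; infer_instance
  rw [Measure.pi_map_pi (f := fun _ x => ⟪x, u⟫) (fun i => hm.aemeasurable),
    Measure.pi_map_pi (f := fun _ g => Real.sqrt ⟪T u, u⟫ * g) (fun i => by fun_prop)]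
  simp_rw [hν.2 u, gauss_scale]

lemma meas_inner_pi [MeasurableSpace H] [BorelSpace H] {n : ℕ} (j : Fin n) (u : H) :
    Measurable fun x : Fin n → H => ⟪x j, u⟫ :=
  ((by fun_prop : Continuous fun x : H => ⟪x,u⟫).measurable).comp (measurable_pi_apply j)

lemma D_single [CompleteSpace H] [MeasurableSpace H] [BorelSpace H] {ν : Measure H} {T : H →L[ℝ] H}
    (hν : IsGaussian ν T) (n : ℕ) (hn : 1 ≤ n) (u : H) (hu : 0 ≤ ⟪T u, u⟫) (q : ℕ) (hq : Even q) (t : ℝ)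
    (ht : 0 < t) (ht4 : t ≤ 1/4) :
    ∫⁻ x, ENNReal.ofReal (((n:ℝ)⁻¹ * ∑ j, ⟪x j, u⟫^2 - ⟪T u, u⟫)^q) ∂(Measure.pi fun _ : Fin n => ν)
      ≤ ENNReal.ofReal (⟪T u, u⟫^q) *
        ENNReal.ofReal ((q / (n*t))^q * (2 * Real.exp (2 * n * t^2))) := by
  set v := ⟪T u, u⟫ with hv
  have hm : Measurable (fun (x : Fin n → H) j => ⟪x j, u⟫) :=
    measurable_pi_lambda _ fun j => meas_inner_pi j u
  have e1 : ∫⁻ x, ENNReal.ofReal (((n:ℝ)⁻¹ * ∑ j, ⟪x j, u⟫^2 - v)^q) ∂(Measure.pi fun _ : Fin n => ν)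
      = ∫⁻ y : Fin n → ℝ, ENNReal.ofReal (((n:ℝ)⁻¹ * ∑ j, (y j)^2 - v)^q)
        ∂((Measure.pi fun _ : Fin n => ν).map (fun x j => ⟪x j, u⟫)) := by
    rw [lintegral_map (by fun_prop) hm]
  rw [e1, gauss_law hν, lintegral_map (by fun_prop) (by fun_prop)]
  have hn0 : (0:ℝ) < n := by exact_mod_cast hn
  have e2 : ∀ g : Fin n → ℝ, ENNReal.ofReal (((n:ℝ)⁻¹ * ∑ j, (Real.sqrt v * g j)^2 - v)^q)
      = ENNReal.ofReal (v^q) * (ENNReal.ofReal (((n:ℝ)⁻¹)^q) *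
        ENNReal.ofReal ((∑ i, ((g i)^2 - 1))^q)) := by
    intro g
    rw [← ENNReal.ofReal_mul (by positivity), ← ENNReal.ofReal_mul (by positivity),
      ← mul_pow, ← mul_pow]
    congr 2
    simp only [mul_pow, Real.sq_sqrt hu, Finset.sum_sub_distrib, ← Finset.mul_sum]
    simp
    field_simp
  rw [← hv]
  simp_rw [e2]
  rw [lintegral_const_mul _ (by fun_prop), lintegral_const_mul _ (by fun_prop)]
  gcongr
  calc _ ≤ ENNReal.ofReal (((n:ℝ)⁻¹)^q) * ENNReal.ofReal ((q / t)^q * (2 * Real.exp (2 * n * t^2))) := by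
        gcongr; exact chi_centered n q hq t ht ht4
    _ = _ := by
        rw [← ENNReal.ofReal_mul (by positivity), ← mul_assoc, ← mul_pow]
        congr 3; field_simp

lemma D_double [CompleteSpace H] [MeasurableSpace H] [BorelSpace H] {ν : Measure H} {T : H →L[ℝ] H}
    (hν : IsGaussian ν T) (n : ℕ) (hn : 1 ≤ n) {F : Type*} [Fintype F] (e : F → H) (ev : F → ℝ)
    (he : Orthonormal ℝ e) (hT : ∀ i, T (e i) = ev i • e i) (hev : ∀ i, 0 ≤ ev i)
    (B tr : ℝ) (hB : 0 < B) (hevB : ∀ i, ev i ≤ B) (htr : ∑ i, ev i ≤ tr)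
    (q : ℕ) (hq : Even q) (t : ℝ) (ht : 0 < t) (ht4 : t ≤ 1/4) :
    ∫⁻ x, ∫⁻ h : F → ℝ, ENNReal.ofReal (⟪(sampleCov x - T) (∑ i, h i • e i), ∑ i, h i • e i⟫^q)
        ∂(Measure.pi fun _ : F => gaussianReal 0 1) ∂(Measure.pi fun _ : Fin n => ν)
      ≤ ENNReal.ofReal ((4 * B * q)^q * Real.exp (tr / B)) *
        ENNReal.ofReal ((q / (n*t))^q * (2 * Real.exp (2 * n * t^2))) := by
  have := hν.1
  have hTu : ∀ h : F → ℝ, ⟪T (∑ i, h i • e i), ∑ i, h i • e i⟫ = ∑ i, ev i * (h i)^2 := by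
    intro h
    simp only [map_sum, map_smul, hT]
    have : ∀ i, h i • ev i • e i = (h i * ev i) • e i := fun i => by rw [smul_smul]
    simp_rw [this]
    rw [he.inner_sum]
    apply Finset.sum_congr rfl; intro i _; simp; ring
  have hform : ∀ (x : Fin n → H) (h : F → ℝ),
      ⟪(sampleCov x - T) (∑ i, h i • e i), ∑ i, h i • e i⟫ =
        (n:ℝ)⁻¹ * ∑ j, (∑ i, h i * ⟪x j, e i⟫)^2 - ∑ i, ev i * (h i)^2 := by
    intro x h
    rw [ContinuousLinearMap.sub_apply, inner_sub_left, sampleCov_inner, hTu]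
    congr 2
    apply Finset.sum_congr rfl; intro j _
    rw [← sq, inner_sum]; simp only [inner_smul_right]
  simp_rw [hform]
  have hmeas : Measurable (fun p : (Fin n → H) × (F → ℝ) =>
      ENNReal.ofReal (((n:ℝ)⁻¹ * ∑ j, (∑ i, p.2 i * ⟪p.1 j, e i⟫)^2 - ∑ i, ev i * (p.2 i)^2)^q)) := by
    have h0 : ∀ j i, Measurable fun p : (Fin n → H) × (F → ℝ) => ⟪p.1 j, e i⟫ :=
      fun j i => (meas_inner_pi j (e i)).comp measurable_fst
    have h1 : ∀ j, Measurable fun p : (Fin n → H) × (F → ℝ) => ∑ i, p.2 i * ⟪p.1 j, e i⟫ := by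
      intro j
      apply Finset.measurable_sum
      intro i _
      have := h0 j i
      fun_prop
    fun_prop
  rw [lintegral_lintegral_swap hmeas.aemeasurable]
  have hb : ∀ h : F → ℝ, ∫⁻ x : Fin n → H, ENNReal.ofReal (((n:ℝ)⁻¹ * ∑ j, (∑ i, h i * ⟪x j, e i⟫)^2
      - ∑ i, ev i * (h i)^2)^q) ∂(Measure.pi fun _ : Fin n => ν)
      ≤ ENNReal.ofReal ((∑ i, ev i * (h i)^2)^q) *
        ENNReal.ofReal ((q / (n*t))^q * (2 * Real.exp (2 * n * t^2))) := by
    intro h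
    have h1 := D_single hν n hn (∑ i, h i • e i)
      (by rw [hTu]; exact Finset.sum_nonneg fun i _ => mul_nonneg (hev i) (sq_nonneg _)) q hq t ht ht4
    simpa only [hTu, inner_sum, inner_smul_right] using h1
  refine (lintegral_mono hb).trans ?_
  rw [lintegral_mul_const _ (by fun_prop)]
  gcongr
  exact chi_weighted ev B tr hB hev hevB htr q

end

section

variable {H : Type*} [NormedAddCommGroup H] [InnerProductSpace ℝ H]

lemma opnorm_of_quad (E : H →L[ℝ] H) (hs : ∀ x y, ⟪E x, y⟫ = ⟪x, E y⟫) (c : ℝ) (hc : 0 ≤ c)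
    (h : ∀ u, |⟪E u, u⟫| ≤ c * ‖u‖^2) : ‖E‖ ≤ c := by
  apply ContinuousLinearMap.opNorm_le_bound _ hc
  intro u
  have key : ∀ w : H, 2 * ⟪E u, w⟫ ≤ c * (‖u‖^2 + ‖w‖^2) := by
    intro w
    have e1 := h (u+w)
    have e2 := h (u-w)
    have p : ⟪E (u+w), u+w⟫ - ⟪E (u-w), u-w⟫ = 4 * ⟪E u, w⟫ := by
      simp only [map_add, map_sub, inner_add_left, inner_add_right, inner_sub_left, inner_sub_right]
      have : ⟪E w, u⟫ = ⟪E u, w⟫ := by rw [hs, real_inner_comm]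
      rw [this]; ring
    have e3 := parallelogram_law_with_norm ℝ u w
    have := abs_le.1 e1
    have := abs_le.1 e2
    nlinarith
  rcases eq_or_ne ‖u‖ 0 with hu | hu
  · rw [norm_eq_zero] at hu; simp [hu]
  rcases eq_or_ne ‖E u‖ 0 with hE | hE
  · rw [hE]; positivity
  have hk := key ((‖u‖/‖E u‖) • E u)
  rw [inner_smul_right, real_inner_self_eq_norm_sq, norm_smul, Real.norm_eq_abs, abs_of_nonneg (by positivity)] at hk
  have h1 : ‖u‖/‖E u‖*‖E u‖ = ‖u‖ := by field_simp
  have h2 : ‖u‖/‖E u‖*‖E u‖^2 = ‖u‖ * ‖E u‖ := by field_simp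
  rw [h1, h2] at hk
  have hup : 0 < ‖u‖ := by positivity
  nlinarith

lemma sampleCov_symm [CompleteSpace H] {n : ℕ} (x : Fin n → H) (u w : H) :
    ⟪sampleCov x u, w⟫ = ⟪u, sampleCov x w⟫ := by
  rw [sampleCov_inner, real_inner_comm, sampleCov_inner]
  simp_rw [mul_comm]

lemma sampleCov_zero [CompleteSpace H] {n : ℕ} (x : Fin n → H) (u : H) (h : ∀ k, ⟪x k, u⟫ = 0) :
    sampleCov x u = 0 := by
  simp [sampleCov, outer, h]

lemma sum_sub_aux {J G : Type*} [AddCommMonoid G] {s F : Finset J} (h : s ⊆ F) (φ : J → G)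
    (hφ : ∀ j, j ∉ s → φ j = 0) : ∑ i : F, φ i = ∑ j ∈ s, φ j := by
  rw [Finset.sum_coe_sort F φ]
  exact (Finset.sum_subset h fun j _ hj => hφ j hj).symm

lemma D_norm [CompleteSpace H] [MeasurableSpace H] [BorelSpace H] {ν : Measure H} {T : H →L[ℝ] H}
    (hν : IsGaussian ν T) (n : ℕ) (hn : 1 ≤ n) {J : Type*} (e : HilbertBasis J ℝ H) (ev : J → ℝ)
    (hs : ∀ x y, ⟪T x, y⟫ = ⟪x, T y⟫)
    (hT : ∀ i, T (e i) = ev i • e i) (hev : ∀ i, 0 ≤ ev i)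
    (B : ℝ) (hB : 0 < B) (hevB : ∀ i, ev i ≤ B) (hsum : Summable ev) (o : J) (ho : 0 < ev o)
    (q : ℕ) (hq : Even q) (hq1 : 1 ≤ q) (t : ℝ) (ht : 0 < t) (ht4 : t ≤ 1/4) :
    ∃ W : (Fin n → H) → ℝ≥0∞, Measurable W ∧
      ∫⁻ x, W x ∂(Measure.pi fun _ : Fin n => ν) ≤
        ENNReal.ofReal ((4 * B * q)^q * Real.exp ((∑' j, ev j) / B)) *
        ENNReal.ofReal ((q / (n*t))^q * (2 * Real.exp (2 * n * t^2))) ∧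
      ∀ x, (∀ k j, ev j = 0 → ⟪x k, e j⟫ = 0) →
        ENNReal.ofReal ((q * ‖sampleCov x - T‖ * Real.exp (-8))^q) ≤ W x := by
  classical
  have := hν.1
  have hcount : (Function.support ev).Countable := hsum.countable_support
  obtain ⟨f, hf⟩ := hcount.exists_eq_range ⟨o, ho.ne'⟩
  let F : ℕ → Finset J := fun N => (Finset.range N).image f
  have hFmono : Monotone F := fun a b hab => Finset.image_subset_image (Finset.range_mono hab)
  let W : ℕ → (Fin n → H) → ℝ≥0∞ := fun N x => ∫⁻ h : F N → ℝ,
    ENNReal.ofReal (⟪(sampleCov x - T) (∑ i, h i • e i), ∑ i, h i • e i⟫^q)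
        ∂(Measure.pi fun _ : F N => gaussianReal 0 1)
  have hWm : ∀ N, Measurable (W N) := by
    intro N
    have hmeas : Measurable (fun p : (Fin n → H) × (F N → ℝ) =>
        ENNReal.ofReal (⟪(sampleCov p.1 - T) (∑ i, p.2 i • e i), ∑ i, p.2 i • e i⟫^q)) := by
      have h1 : ∀ p : (Fin n → H) × (F N → ℝ),
        ⟪(sampleCov p.1 - T) (∑ i, p.2 i • e i), ∑ i, p.2 i • e i⟫ =
        (n:ℝ)⁻¹ * ∑ j, (∑ i, p.2 i * ⟪p.1 j, e i⟫)^2 - ⟪T (∑ i, p.2 i • e i), ∑ i, p.2 i • e i⟫ := by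
        intro p
        rw [sub_apply, inner_sub_left, sampleCov_inner]
        simp only [inner_sum, inner_smul_right, sq]
      simp_rw [h1]
      have h0 : ∀ j (i : F N), Measurable fun p : (Fin n → H) × (F N → ℝ) => ⟪p.1 j, e i⟫ :=
        fun j i => (meas_inner_pi j (e i)).comp measurable_fst
      have h1 : ∀ j, Measurable fun p : (Fin n → H) × (F N → ℝ) => ∑ i, p.2 i * ⟪p.1 j, e i⟫ := by
        intro j
        apply Finset.measurable_sum
        intro i _
        have := h0 j i
        fun_prop
      have h2 : Measurable fun p : (Fin n → H) × (F N → ℝ) =>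
          ⟪T (∑ i, p.2 i • e i), ∑ i, p.2 i • e i⟫ := by
        have : Continuous fun h : F N → ℝ => ⟪T (∑ i, h i • e i), ∑ i, h i • e i⟫ := by fun_prop
        exact this.measurable.comp measurable_snd
      fun_prop
    exact hmeas.lintegral_prod_right'
  refine ⟨fun x => liminf (fun N => W N x) atTop, Measurable.liminf hWm, ?_, ?_⟩
  · refine (lintegral_liminf_le hWm).trans ?_
    refine liminf_le_of_frequently_le' (Frequently.of_forall fun N => ?_)
    refine D_double hν n hn (fun i : F N => e i) (fun i => ev i)
      (e.orthonormal.comp _ Subtype.val_injective) (fun i => hT i) (fun i => hev i) B _ hB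
      (fun i => hevB i) ?_ q hq t ht ht4
    rw [Finset.sum_coe_sort (F N) ev]
    exact hsum.sum_le_tsum _ (fun i _ => hev i)
  · intro x hx
    set E := sampleCov x - T with hE
    set L := liminf (fun N => W N x) atTop with hL
    rcases eq_or_ne L ⊤ with htop | htop
    · change _ ≤ L; rw [htop]; exact le_top
    have hEs : ∀ a b, ⟪E a, b⟫ = ⟪a, E b⟫ := by
      intro a b
      rw [hE, sub_apply, sub_apply, inner_sub_left, inner_sub_right, hs, sampleCov_symm]
    have hE0 : ∀ j, ev j = 0 → E (e j) = 0 := by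
      intro j hj
      rw [hE, sub_apply, hT, hj, sampleCov_zero x _ (fun k => hx k j hj)]
      simp
    have hqpos : (0:ℝ) < q := by exact_mod_cast hq1
    set c : ℝ := (L.toReal)^((q:ℝ)⁻¹) * Real.exp 8 / q with hc
    have hc0 : 0 ≤ c := by positivity
    have hcq : (q * c * Real.exp (-8))^q = L.toReal := by
      have : q * c * Real.exp (-8) = (L.toReal)^((q:ℝ)⁻¹) := by
        rw [hc, Real.exp_neg]; field_simp
      rw [this, Real.rpow_inv_natCast_pow (by positivity) (by omega)]
    have hunit : ∀ (s : Finset J) (a : J → ℝ), (∀ j ∈ s, ev j ≠ 0) → ∑ j ∈ s, a j ^2 = 1 →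
        |⟪E (∑ j ∈ s, a j • e j), ∑ j ∈ s, a j • e j⟫| ≤ c := by
      intro s a hsne ha
      have hM : ∃ M, s ⊆ F M := by
        have : ∀ j ∈ s, ∃ k, f k = j := by
          intro j hj
          have : j ∈ range f := hf ▸ hsne j hj
          exact this
        choose! k hk using this
        refine ⟨s.sup k + 1, fun j hj => ?_⟩
        simp only [F, Finset.mem_image, Finset.mem_range]
        exact ⟨k j, Nat.lt_succ_of_le (Finset.le_sup hj), hk j hj⟩
      obtain ⟨M, hM⟩ := hM
      have hle : ENNReal.ofReal ((q * |⟪E (∑ j ∈ s, a j • e j), ∑ j ∈ s, a j • e j⟫| * Real.exp (-8))^q) ≤ L := by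
        refine le_liminf_of_le (by isBoundedDefault) ?_
        filter_upwards [eventually_ge_atTop M] with N hN
        have hsN : s ⊆ F N := hM.trans (hFmono hN)
        have := quad_low_pi (fun i : F N => e i) E (fun i => if (i : J) ∈ s then a i else 0) ?_ q hq hq1
        · have e2 := sum_sub_aux hsN (fun j => (if j ∈ s then a j else 0) • e j) (fun j hj => by simp [hj])
          rw [e2] at this
          have e3 : ∑ j ∈ s, (if j ∈ s then a j else 0) • e j = ∑ j ∈ s, a j • e j :=
            Finset.sum_congr rfl fun j hj => by simp [hj]
          rw [e3] at this
          exact this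
        · rw [sum_sub_aux hsN (fun j => (if j ∈ s then a j else 0)^2) (fun j hj => by simp [hj]), ← ha]
          exact Finset.sum_congr rfl fun j hj => by simp [hj]
      rw [← ENNReal.ofReal_toReal htop, ENNReal.ofReal_le_ofReal_iff (by positivity), ← hcq] at hle
      have h3 := (pow_le_pow_iff_left₀ (by positivity) (by positivity) (by omega)).1 hle
      have h4 : 0 < Real.exp (-8) := Real.exp_pos _
      have h5 := le_of_mul_le_mul_right h3 h4
      exact le_of_mul_le_mul_left h5 hqpos
    have hfin : ∀ (s : Finset J) (a : J → ℝ),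
        |⟪E (∑ j ∈ s, a j • e j), ∑ j ∈ s, a j • e j⟫| ≤ c * ‖∑ j ∈ s, a j • e j‖^2 := by
      intro s a
      set s' := s.filter (fun j => ev j ≠ 0) with hs'
      have hsplit : ∑ j ∈ s, a j • e j = ∑ j ∈ s', a j • e j + ∑ j ∈ s.filter (fun j => ¬ ev j ≠ 0), a j • e j :=
        (Finset.sum_filter_add_sum_filter_not s _ _).symm
      set y := ∑ j ∈ s', a j • e j with hy
      set z := ∑ j ∈ s.filter (fun j => ¬ ev j ≠ 0), a j • e j with hz
      have hEz : E z = 0 := by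
        rw [hz, map_sum]; apply Finset.sum_eq_zero
        intro j hj
        simp only [Finset.mem_filter, not_not] at hj
        rw [map_smul, hE0 j hj.2, smul_zero]
      have hnorm : ∀ t : Finset J, ‖∑ j ∈ t, a j • e j‖^2 = ∑ j ∈ t, a j^2 := by
        intro t
        rw [← real_inner_self_eq_norm_sq, e.orthonormal.inner_sum]
        simp [sq]
      have hny : ‖y‖^2 ≤ ‖∑ j ∈ s, a j • e j‖^2 := by
        rw [hy, hnorm, hnorm]
        exact Finset.sum_le_sum_of_subset_of_nonneg (Finset.filter_subset _ _) fun _ _ _ => sq_nonneg _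
      have h1 : ⟪E (∑ j ∈ s, a j • e j), ∑ j ∈ s, a j • e j⟫ = ⟪E y, y⟫ := by
        rw [hsplit, map_add, hEz, add_zero, inner_add_right, hEs y z, hEz, inner_zero_right, add_zero]
      rw [h1]
      refine le_trans ?_ (mul_le_mul_of_nonneg_left hny hc0)
      rcases eq_or_ne ‖y‖ 0 with h0 | h0
      · rw [norm_eq_zero] at h0; rw [h0]; simp
      have h2 := hunit s' (fun j => ‖y‖⁻¹ * a j) (fun j hj => (Finset.mem_filter.1 hj).2) (by
        simp only [mul_pow, ← Finset.mul_sum]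
        rw [← hnorm, ← hy]; field_simp)
      have h3 : ∑ j ∈ s', (‖y‖⁻¹ * a j) • e j = ‖y‖⁻¹ • y := by
        rw [hy, Finset.smul_sum]; simp only [mul_smul]
      simp only [h3, map_smul, inner_smul_left, inner_smul_right] at h2
      simp only [map_inv₀, conj_trivial] at h2
      rw [abs_mul, abs_mul, abs_of_nonneg (show 0 ≤ ‖y‖⁻¹ by positivity)] at h2
      have h4 : |⟪E y, y⟫| = (‖y‖⁻¹ * (‖y‖⁻¹ * |⟪E y, y⟫|)) * ‖y‖^2 := by field_simp
      rw [h4]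
      exact mul_le_mul_of_nonneg_right h2 (by positivity)
    have hall : ∀ u, |⟪E u, u⟫| ≤ c * ‖u‖^2 := by
      intro u
      have hl := e.hasSum_repr u
      have hl : Tendsto (fun s : Finset J => ∑ j ∈ s, e.repr u j • e j) atTop (𝓝 u) := hl
      have hcont1 : Continuous fun u : H => |⟪E u, u⟫| := by fun_prop
      have hcont2 : Continuous fun u : H => c * ‖u‖^2 := by fun_prop
      exact le_of_tendsto_of_tendsto' ((hcont1.tendsto u).comp hl) ((hcont2.tendsto u).comp hl)
        (fun s => hfin s _)
    have hn := opnorm_of_quad E hEs c hc0 hall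
    calc _ ≤ ENNReal.ofReal ((q * c * Real.exp (-8))^q) := by
          apply ENNReal.ofReal_le_ofReal; gcongr
      _ = L := by rw [hcq, ENNReal.ofReal_toReal htop]

end

section

variable {H : Type*} [NormedAddCommGroup H] [InnerProductSpace ℝ H]

lemma cube_le_aux (δ M : ℝ) (hδ : 0 ≤ δ) (hM : 0 < M) (q : ℕ) (hq : 3 ≤ q) :
    δ^3 ≤ M^3 * (1 + δ^q / M^q) := by
  rcases le_total δ M with h | h
  · have : δ^3 ≤ M^3 := pow_le_pow_left₀ hδ h 3
    have : 0 ≤ M^3 * (δ^q/M^q) := by positivity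
    linarith
  · have h1 : 1 ≤ δ / M := by rw [one_le_div hM]; exact h
    have h2 : (δ/M)^3 ≤ (δ/M)^q := pow_le_pow_right₀ h1 hq
    rw [div_pow, div_pow, div_le_iff₀ (by positivity)] at h2
    have : 0 < M^3 := by positivity
    linarith

lemma D_final [CompleteSpace H] [MeasurableSpace H] [BorelSpace H] {ν : Measure H} {T : H →L[ℝ] H}
    (hν : IsGaussian ν T) (n : ℕ) (hn : 1 ≤ n) {J : Type*} (e : HilbertBasis J ℝ H) (ev : J → ℝ)
    (hs : ∀ x y, ⟪T x, y⟫ = ⟪x, T y⟫)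
    (hT : ∀ i, T (e i) = ev i • e i) (hev : ∀ i, 0 ≤ ev i)
    (B : ℝ) (hB : 0 < B) (hevB : ∀ i, ev i ≤ B) (hsum : Summable ev) (o : J) (ho : 0 < ev o)
    (R : ℝ) (hR : (∑' j, ev j) / B = R) (hR1 : 1 ≤ R) (hRn : R ≤ n) :
    ∃ W : (Fin n → H) → ℝ≥0∞, Measurable W ∧
      ∫⁻ x, W x ∂(Measure.pi fun _ : Fin n => ν) ≤
        ENNReal.ofReal (2 * (300 * Real.exp 10 * B * Real.sqrt (R / n))^3) ∧
      ∀ x, (∀ k j, ev j = 0 → ⟪x k, e j⟫ = 0) →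
        ENNReal.ofReal (‖sampleCov x - T‖^3) ≤ W x := by
  have := hν.1
  have hn0 : (0:ℝ) < n := by exact_mod_cast hn
  set q : ℕ := 2 * ⌈R⌉₊ + 2 with hqdef
  have hqe : Even q := by rw [hqdef]; exact ⟨⌈R⌉₊ + 1, by ring⟩
  have hc1 : R ≤ ⌈R⌉₊ := Nat.le_ceil R
  have hc2 : (⌈R⌉₊ : ℝ) < R + 1 := Nat.ceil_lt_add_one (by linarith)
  have hqR : R ≤ q := by rw [hqdef]; push_cast; linarith
  have hq6 : (q:ℝ) ≤ 6 * R := by rw [hqdef]; push_cast; linarith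
  have hq4 : 4 ≤ q := by
    have : 1 ≤ ⌈R⌉₊ := Nat.one_le_ceil_iff.2 (by linarith)
    omega
  have hqpos : (0:ℝ) < q := by linarith
  set t : ℝ := Real.sqrt (q/n) / 12 with ht
  have hsp : 0 < Real.sqrt (q/n) := Real.sqrt_pos.2 (by positivity)
  have hs3 : Real.sqrt (q/n) ≤ 3 * Real.sqrt (R/n) := by
    rw [show (3:ℝ) = Real.sqrt 9 by rw [show (9:ℝ) = 3^2 by norm_num]; simp, ← Real.sqrt_mul (by norm_num)]
    apply Real.sqrt_le_sqrt
    rw [← mul_div_assoc]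
    gcongr
    linarith
  have hs1 : Real.sqrt (R/n) ≤ 1 := by
    rw [Real.sqrt_le_left (by norm_num), one_pow, div_le_one hn0]; exact hRn
  have ht0 : 0 < t := by positivity
  have ht4 : t ≤ 1/4 := by rw [ht]; linarith
  obtain ⟨W, hWm, hWi, hWx⟩ := D_norm hν n hn e ev hs hT hev B hB hevB hsum o ho q hqe (by omega) t ht0 ht4
  rw [hR] at hWi
  set M := 300 * Real.exp 10 * B * Real.sqrt (R / n) with hM
  have hRs : 0 < Real.sqrt (R/n) := Real.sqrt_pos.2 (by positivity)
  have hM0 : 0 < M := by positivity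
  set D : ℝ := (q * Real.exp (-8) * M)^q with hD
  have hD0 : 0 < D := by positivity
  have hbound : (4 * B * q)^q * Real.exp R * ((q / (n*t))^q * (2 * Real.exp (2 * n * t^2))) ≤ D := by
    have b1 : Real.exp R ≤ Real.exp 1 ^ q := by
      rw [← Real.exp_nat_mul]; apply Real.exp_le_exp.2; linarith
    have b2 : Real.exp (2*n*t^2) ≤ Real.exp 1 ^ q := by
      rw [← Real.exp_nat_mul]; apply Real.exp_le_exp.2
      rw [ht, div_pow, Real.sq_sqrt (by positivity)]
      have : 2 * (n:ℝ) * (q / n / 12^2) = q/72 := by field_simp; norm_num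
      rw [this]; linarith
    have b3 : (2:ℝ) ≤ 2^q := by
      calc (2:ℝ) = 2^1 := by norm_num
        _ ≤ 2^q := pow_le_pow_right₀ (by norm_num) (by omega)
    have b4 : q / (n*t) ≤ 36 * Real.sqrt (R/n) := by
      have : q / (n*t) = 12 * Real.sqrt (q/n) := by
        rw [ht]
        have h1 : (q:ℝ) = n * (Real.sqrt (q/n) * Real.sqrt (q/n)) := by
          rw [Real.mul_self_sqrt (by positivity)]; field_simp
        generalize Real.sqrt (q/n) = s at *
        rw [h1]; field_simp
      rw [this]; linarith
    calc (4 * B * q)^q * Real.exp R * ((q / (n*t))^q * (2 * Real.exp (2 * n * t^2)))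
        ≤ (4 * B * q)^q * Real.exp 1 ^q * ((36 * Real.sqrt (R/n))^q * (2^q * Real.exp 1 ^ q)) := by
          gcongr
      _ = ((4 * B * q) * Real.exp 1 * ((36 * Real.sqrt (R/n)) * (2 * Real.exp 1)))^q := by
          simp only [mul_pow]
      _ ≤ D := by
          rw [hD]
          apply pow_le_pow_left₀ (by positivity)
          have h10 : Real.exp (-8) * Real.exp 10 = Real.exp 1 * Real.exp 1 := by
            rw [← Real.exp_add, ← Real.exp_add]; norm_num
          have : q * Real.exp (-8) * M = 300 * (Real.exp 1 * Real.exp 1) * q * B * Real.sqrt (R/n) := by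
            rw [hM, ← h10]; ring
          rw [this]
          have : 0 ≤ (Real.exp 1 * Real.exp 1) * q * B * Real.sqrt (R/n) := by positivity
          linarith
  rw [← ENNReal.ofReal_mul (by positivity)] at hWi
  have hWD : ∫⁻ x, W x ∂(Measure.pi fun _ : Fin n => ν) ≤ ENNReal.ofReal D :=
    hWi.trans (ENNReal.ofReal_le_ofReal hbound)
  refine ⟨fun x => ENNReal.ofReal (M^3) * (1 + ENNReal.ofReal D⁻¹ * W x), by fun_prop, ?_, ?_⟩
  · rw [lintegral_const_mul _ (by fun_prop), lintegral_add_left (by fun_prop), lintegral_const_mul _ hWm]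
    rw [mul_comm (2:ℝ), ENNReal.ofReal_mul (by positivity)]
    gcongr
    simp only [lintegral_const, measure_univ, mul_one]
    calc 1 + ENNReal.ofReal D⁻¹ * ∫⁻ x, W x ∂(Measure.pi fun _ : Fin n => ν)
        ≤ 1 + ENNReal.ofReal D⁻¹ * ENNReal.ofReal D := by gcongr
      _ = ENNReal.ofReal 2 := by
        rw [← ENNReal.ofReal_mul (by positivity), inv_mul_cancel₀ hD0.ne']
        simp; norm_num
  · intro x hx
    have h1 := hWx x hx
    set δ := ‖sampleCov x - T‖
    have h2 := cube_le_aux δ M (norm_nonneg _) hM0 q (by omega)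
    calc ENNReal.ofReal (δ^3) ≤ ENNReal.ofReal (M^3 * (1 + δ^q/M^q)) := ENNReal.ofReal_le_ofReal h2
      _ = ENNReal.ofReal (M^3) * (1 + ENNReal.ofReal D⁻¹ * ENNReal.ofReal ((q * δ * Real.exp (-8))^q)) := by
        rw [ENNReal.ofReal_mul (by positivity), ENNReal.ofReal_add (by norm_num) (by positivity),
          ← ENNReal.ofReal_mul (by positivity), ENNReal.ofReal_one]
        congr 3
        have e1 : D = (q * Real.exp (-8))^q * M^q := by rw [hD, mul_pow]
        have e2 : (q * δ * Real.exp (-8))^q = (q * Real.exp (-8))^q * δ^q := by rw [← mul_pow]; ring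
        rw [e1, e2]
        have e3 : (q * Real.exp (-8))^q ≠ 0 := by positivity
        have e4 : M^q ≠ 0 := by positivity
        generalize (q * Real.exp (-8))^q = a at *
        generalize M^q = b at *
        field_simp
      _ ≤ ENNReal.ofReal (M^3) * (1 + ENNReal.ofReal D⁻¹ * W x) := by gcongr

end

section

variable {H : Type*} [NormedAddCommGroup H] [InnerProductSpace ℝ H]

lemma hb_norm_sq [CompleteSpace H] {J : Type*} (e : HilbertBasis J ℝ H) (y : H) :
    HasSum (fun j => ⟪e j, y⟫^2) (‖y‖^2) := by
  have h := e.hasSum_inner_mul_inner y y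
  rw [real_inner_self_eq_norm_sq] at h
  have e1 : (fun j => ⟪e j, y⟫^2) = fun j => ⟪y, e j⟫ * ⟪e j, y⟫ := by
    funext j; rw [real_inner_comm, sq]
  rw [e1]; exact h

lemma resolvent_vec [CompleteSpace H] {J : Type*} (e : HilbertBasis J ℝ H) (c : J → ℝ) (K : ℝ) (hK : 0 ≤ K)
    (hc : ∀ j, |c j| ≤ K) (y : H) :
    ∃ y' : H, (∀ j, ⟪e j, y'⟫ = c j * ⟪e j, y⟫) ∧ ‖y'‖ ≤ K * ‖y‖ := by
  have hle : ∀ j, (c j * ⟪e j, y⟫)^2 ≤ K^2 * ⟪e j, y⟫^2 := by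
    intro j
    rw [mul_pow]
    apply mul_le_mul_of_nonneg_right _ (sq_nonneg _)
    rw [← sq_abs (c j)]
    exact pow_le_pow_left₀ (abs_nonneg _) (hc j) 2
  have hs : Summable fun j => (c j * ⟪e j, y⟫)^2 :=
    Summable.of_nonneg_of_le (fun j => sq_nonneg _) hle ((hb_norm_sq e y).summable.mul_left _)
  have hmem : Memℓp (fun j => c j * ⟪e j, y⟫) 2 := by
    apply memℓp_gen
    simpa [← abs_mul] using hs
  let f : lp (fun _ : J => ℝ) 2 := ⟨fun j => c j * ⟪e j, y⟫, hmem⟩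
  have hy : ∀ j, ⟪e j, e.repr.symm f⟫ = c j * ⟪e j, y⟫ := by
    intro j
    rw [← e.repr_apply_apply, LinearIsometryEquiv.apply_symm_apply]
  refine ⟨e.repr.symm f, hy, ?_⟩
  apply le_of_sq_le_sq _ (by positivity)
  have h1 := hb_norm_sq e (e.repr.symm f)
  simp only [hy] at h1
  rw [mul_pow]
  exact hasSum_le hle h1 ((hb_norm_sq e y).mul_left _)

lemma hb_ext [CompleteSpace H] {J : Type*} (e : HilbertBasis J ℝ H) (x y : H)
    (h : ∀ j, ⟪e j, x⟫ = ⟪e j, y⟫) : x = y := by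
  apply e.repr.injective
  ext j
  rw [e.repr_apply_apply, e.repr_apply_apply, h]

lemma perturb [CompleteSpace H] {J : Type*} [DecidableEq J] (e : HilbertBasis J ℝ H) (ev : J → ℝ) (o : J)
    (T A : H →L[ℝ] H) (hs : ∀ x y, ⟪T x, y⟫ = ⟪x, T y⟫)
    (hT : ∀ i, T (e i) = ev i • e i) (g : ℝ) (hg : 0 < g) (hgap : ∀ j, j ≠ o → g ≤ |ev o - ev j|)
    (v : H) (hv : ‖v‖ = 1) (l : ℝ) (hl : A v = l • v) (hlo : |l - ev o| ≤ ‖A - T‖) :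
    |⟪v, e o⟫^2 - 1 + ∑' j, (if j = o then 0 else (ev o - ev j)⁻¹ ^2 * ⟪e j, (A - T) (e o)⟫^2)|
      ≤ 16 * (‖A - T‖^3 / g^3) := by
  set E := A - T with hE
  set δ := ‖E‖ with hδ
  set c : J → ℝ := fun j => if j = o then 0 else (ev o - ev j)⁻¹ with hc
  have hcb : ∀ j, |c j| ≤ g⁻¹ := by
    intro j
    simp only [hc]
    split_ifs with h
    · simp; exact hg.le
    · rw [abs_inv]; exact inv_anti₀ hg (hgap j h)
  have hor : ∀ j, ⟪e j, e o⟫ = if j = o then (1:ℝ) else 0 := fun j =>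
    orthonormal_iff_ite.1 e.orthonormal j o
  have ho1 : ‖e o‖ = 1 := e.orthonormal.1 o
  obtain ⟨z, hz, hzn⟩ := resolvent_vec e c g⁻¹ (by positivity) hcb (E (e o))
  set α := ⟪e o, v⟫ with hα
  set w := v - α • e o with hw
  have hwj : ∀ j, ⟪e j, w⟫ = if j = o then 0 else ⟪e j, v⟫ := by
    intro j
    rw [hw, inner_sub_right, inner_smul_right, hor]
    split_ifs with h
    · rw [h, hα]; ring
    · ring
  have hEv : E v = l • v - T v := by rw [hE, sub_apply, hl]
  have hEvj : ∀ j, ⟪e j, E v⟫ = (l - ev j) * ⟪e j, v⟫ := by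
    intro j
    rw [hEv, inner_sub_right, inner_smul_right, ← hs, hT, inner_smul_left]
    simp; ring
  obtain ⟨w1, hw1, hw1n⟩ := resolvent_vec e c g⁻¹ (by positivity) hcb (E v - (l - ev o) • v)
  obtain ⟨u, hu, hun⟩ := resolvent_vec e c g⁻¹ (by positivity) hcb (E w - (l - ev o) • w)
  have hcm : ∀ j, j ≠ o → c j * (ev o - ev j) = 1 := by
    intro j hj
    simp only [hc, if_neg hj]
    have : ev o - ev j ≠ 0 := by
      intro h; have := hgap j hj; rw [h, abs_zero] at this; linarith
    field_simp
  have hc0 : c o = 0 := by simp [hc]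
  have hww1 : w = w1 := by
    apply hb_ext e
    intro j
    rw [hwj, hw1, inner_sub_right, inner_smul_right, hEvj]
    split_ifs with h
    · rw [h, hc0]; ring
    · have := hcm j h
      linear_combination (-⟪e j, v⟫) * this
  have hwzu : w = α • z + u := by
    apply hb_ext e
    intro j
    have hEw : ⟪e j, E w⟫ = ⟪e j, E v⟫ - α * ⟪e j, E (e o)⟫ := by
      rw [hw, map_sub, map_smul, inner_sub_right, inner_smul_right]
    rw [inner_add_right, inner_smul_right, hz, hu, inner_sub_right (e j) (E w), inner_smul_right, hEw, hEvj, hwj]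
    split_ifs with h
    · rw [h, hc0]; ring
    · have := hcm j h
      linear_combination (-⟪e j, v⟫) * this
  set d := δ / g with hd
  have hδ0 : 0 ≤ δ := norm_nonneg _
  have hd0 : 0 ≤ d := by positivity
  have hEn : ∀ y, ‖E y‖ ≤ δ * ‖y‖ := fun y => E.le_opNorm y
  have hsubn : ∀ y, ‖E y - (l - ev o) • y‖ ≤ 2 * δ * ‖y‖ := by
    intro y
    refine (norm_sub_le _ _).trans ?_
    rw [norm_smul, Real.norm_eq_abs]
    have := mul_le_mul_of_nonneg_right hlo (norm_nonneg y)
    have := hEn y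
    linarith
  have hzd : ‖z‖ ≤ d := by
    refine hzn.trans ?_
    have := hEn (e o)
    rw [ho1, mul_one] at this
    rw [hd, div_eq_inv_mul]
    gcongr
  have hwd : ‖w‖ ≤ 2 * d := by
    rw [hww1]
    refine hw1n.trans ?_
    have := hsubn v
    rw [hv, mul_one] at this
    calc g⁻¹ * ‖E v - (l - ev o) • v‖ ≤ g⁻¹ * (2 * δ) := by gcongr
      _ = 2 * d := by rw [hd]; field_simp
  have hud : ‖u‖ ≤ 4 * d^2 := by
    refine hun.trans ?_
    calc g⁻¹ * ‖E w - (l - ev o) • w‖ ≤ g⁻¹ * (2 * δ * ‖w‖) := by gcongr; exact hsubn w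
      _ ≤ g⁻¹ * (2 * δ * (2 * d)) := by gcongr
      _ = 4 * (g⁻¹ * δ) * d := by ring
      _ = 4 * d^2 := by rw [hd]; field_simp
  have hα2 : ‖w‖^2 = 1 - α^2 := by
    rw [hw, norm_sub_sq_real, inner_smul_right, norm_smul, ho1, hv, real_inner_comm, ← hα, Real.norm_eq_abs,
      mul_one, sq_abs]
    ring
  have hZ : ∑' j, (if j = o then 0 else (ev o - ev j)⁻¹ ^2 * ⟪e j, E (e o)⟫^2) = ‖z‖^2 := by
    rw [← (hb_norm_sq e z).tsum_eq]
    apply tsum_congr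
    intro j
    rw [hz]
    simp only [hc]
    split_ifs <;> ring
  rw [hZ, real_inner_comm, ← hα]
  have h16 : δ^3/g^3 = d^3 := by rw [hd, div_pow]
  rw [h16]
  have hα1 : α^2 ≤ 1 := by nlinarith [sq_nonneg ‖w‖]
  have hz2 : ‖z‖^2 ≤ d^2 := pow_le_pow_left₀ (norm_nonneg _) hzd 2
  have hz0 : 0 ≤ ‖z‖^2 := sq_nonneg _
  rcases le_total 1 d with h1 | h1
  · have h3 : d^2 ≤ d^3 := pow_le_pow_right₀ h1 (by norm_num)
    have h2 : 1 ≤ d^2 := by nlinarith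
    rw [abs_le]; constructor <;> nlinarith [sq_nonneg α]
  · have hw2 : ‖w‖^2 ≤ (2*d)^2 := pow_le_pow_left₀ (norm_nonneg _) hwd 2
    have hαa : |α| ≤ 1 := by rw [← sq_le_one_iff_abs_le_one]; exact hα1
    have hαz : ‖α • z‖ ≤ d := by
      rw [norm_smul, Real.norm_eq_abs]
      calc |α| * ‖z‖ ≤ 1 * d := by gcongr
        _ = d := one_mul d
    have hdiff : |‖w‖ - ‖α • z‖| ≤ 4 * d^2 := by
      refine (abs_norm_sub_norm_le w (α • z)).trans ?_
      rw [hwzu, add_sub_cancel_left]; exact hud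
    have hprod : |‖w‖^2 - ‖α • z‖^2| ≤ 12 * d^3 := by
      rw [sq_sub_sq, abs_mul, abs_of_nonneg (show 0 ≤ ‖w‖ + ‖α • z‖ by positivity)]
      calc (‖w‖ + ‖α • z‖) * |‖w‖ - ‖α • z‖| ≤ (2*d + d) * (4*d^2) := by gcongr
        _ = 12 * d^3 := by ring
    have hαz2 : ‖α • z‖^2 = α^2 * ‖z‖^2 := by
      rw [norm_smul, mul_pow, Real.norm_eq_abs, sq_abs]
    have hprod2 : ‖w‖^2 * ‖z‖^2 ≤ 4 * d^3 := by
      calc ‖w‖^2 * ‖z‖^2 ≤ (2*d)^2 * d^2 := by gcongr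
        _ = 4 * d^3 * d := by ring
        _ ≤ 4 * d^3 * 1 := by gcongr
        _ = _ := by ring
    have hp0 : 0 ≤ ‖w‖^2 * ‖z‖^2 := by positivity
    have key : α^2 - 1 + ‖z‖^2 = -(‖w‖^2 - ‖α • z‖^2) + ‖w‖^2 * ‖z‖^2 := by
      rw [hαz2, hα2]; ring
    rw [key]
    have := abs_le.1 hprod
    rw [abs_le]; constructor <;> linarith

end

section

variable {H : Type*} [NormedAddCommGroup H] [InnerProductSpace ℝ H]

lemma gauss_fourth : ∫ x, x^4 ∂(gaussianReal 0 1) = 3 := by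
  have h0 : (0:ℝ) ∈ interior (integrableExpSet id (gaussianReal 0 1)) := by
    rw [integrableExpSet_id_gaussianReal]; simp
  have h := iteratedDeriv_mgf_zero h0 4
  have hm : mgf id (gaussianReal 0 1) = fun t => Real.exp (t^2/2) := by
    rw [mgf_id_gaussianReal]; funext t; simp
  rw [hm] at h
  have p2 : ∀ t : ℝ, HasDerivAt (fun t : ℝ => t^2) (2*t) t := by
    intro t; simpa using hasDerivAt_pow 2 t
  have p3 : ∀ t : ℝ, HasDerivAt (fun t : ℝ => t^3) (3*t^2) t := by
    intro t; simpa using hasDerivAt_pow 3 t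
  have p1 : ∀ t : ℝ, HasDerivAt (fun t : ℝ => t) 1 t := fun t => hasDerivAt_id' t
  have hb : ∀ t : ℝ, HasDerivAt (fun t => Real.exp (t^2/2)) (t * Real.exp (t^2/2)) t := by
    intro t
    exact (((p2 t).div_const 2).exp).congr_deriv (by ring)
  have d1 : deriv (fun t : ℝ => Real.exp (t^2/2)) = fun t => t * Real.exp (t^2/2) :=
    funext fun t => (hb t).deriv
  have d2 : deriv (fun t : ℝ => t * Real.exp (t^2/2)) = fun t => (1+t^2) * Real.exp (t^2/2) := by
    funext t
    exact (((p1 t).fun_mul (hb t)).congr_deriv (by ring)).deriv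
  have d3 : deriv (fun t : ℝ => (1+t^2) * Real.exp (t^2/2)) = fun t => (3*t+t^3) * Real.exp (t^2/2) := by
    funext t
    exact ((((p2 t).const_add 1).fun_mul (hb t)).congr_deriv (by ring)).deriv
  have d4 : deriv (fun t : ℝ => (3*t+t^3) * Real.exp (t^2/2)) = fun t => (3+6*t^2+t^4) * Real.exp (t^2/2) := by
    funext t
    exact (((((p1 t).const_mul 3).fun_add (p3 t)).fun_mul (hb t)).congr_deriv (by ring)).deriv
  rw [iteratedDeriv_succ, iteratedDeriv_succ, iteratedDeriv_succ, iteratedDeriv_succ, iteratedDeriv_zero,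
    d1, d2, d3, d4] at h
  simp at h
  exact h.symm

lemma gauss_second : ∫ x, x^2 ∂(gaussianReal 0 1) = 1 := by
  have h := variance_id_gaussianReal (μ := 0) (v := 1)
  rw [variance_of_integral_eq_zero (by fun_prop) (by simp [integral_id_gaussianReal])] at h
  simpa using h

lemma nu_moment [CompleteSpace H] [MeasurableSpace H] [BorelSpace H] {ν : Measure H} {T : H →L[ℝ] H}
    (hν : IsGaussian ν T) (u : H) (hu : 0 ≤ ⟪T u, u⟫) :
    MemLp (fun x => ⟪x, u⟫) 4 ν ∧ ∫ x, ⟪x, u⟫^4 ∂ν = 3 * ⟪T u, u⟫^2 ∧ ∫ x, ⟪x, u⟫^2 ∂ν = ⟪T u, u⟫ := by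
  have hm : Measurable fun x : H => ⟪x, u⟫ := (by fun_prop : Continuous fun x : H => ⟪x,u⟫).measurable
  have e1 : ∀ k : ℕ, ∫ x, ⟪x, u⟫^k ∂ν = Real.sqrt ⟪T u, u⟫ ^ k * ∫ y, y^k ∂(gaussianReal 0 1) := by
    intro k
    rw [← integral_map (f := fun y : ℝ => y^k) hm.aemeasurable (by fun_prop), hν.2 u, ← gauss_scale,
      integral_map (by fun_prop) (by fun_prop)]
    simp_rw [mul_pow]
    rw [integral_const_mul]
  refine ⟨?_, ?_, ?_⟩
  · have := memLp_id_gaussianReal (μ := 0) (v := Real.toNNReal ⟪T u, u⟫) 4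
    rw [← hν.2 u, memLp_map_measure_iff (by fun_prop) hm.aemeasurable] at this
    exact this
  · rw [e1, gauss_fourth, show (4:ℕ) = 2*2 by norm_num, pow_mul, Real.sq_sqrt hu]; ring
  · rw [e1, gauss_second, Real.sq_sqrt hu, mul_one]

lemma nu_cross [CompleteSpace H] [MeasurableSpace H] [BorelSpace H] {ν : Measure H} {T : H →L[ℝ] H}
    (hν : IsGaussian ν T) (a b : H) (s t : ℝ) (hs : 0 ≤ s) (ht : 0 ≤ t) (ha : T a = s • a) (hb : T b = t • b)
    (na : ‖a‖ = 1) (nb : ‖b‖ = 1) (hab : ⟪a, b⟫ = 0) :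
    MemLp (fun x => ⟪x, a⟫ * ⟪x, b⟫) 2 ν ∧ ∫ x, ⟪x, a⟫ * ⟪x, b⟫ ∂ν = 0 ∧
      ∫ x, (⟪x, a⟫ * ⟪x, b⟫)^2 ∂ν = s * t := by
  have := hν.1
  have hba : ⟪b, a⟫ = 0 := by rw [real_inner_comm]; exact hab
  have qa : ⟪T a, a⟫ = s := by rw [ha, inner_smul_left, real_inner_self_eq_norm_sq, na]; simp
  have qb : ⟪T b, b⟫ = t := by rw [hb, inner_smul_left, real_inner_self_eq_norm_sq, nb]; simp
  have q1 : ⟪T (a+b), a+b⟫ = s + t := by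
    simp only [map_add, ha, hb, inner_add_left, inner_add_right, inner_smul_left,
      real_inner_self_eq_norm_sq, na, nb, hab, hba]; simp
  have q2 : ⟪T (a-b), a-b⟫ = s + t := by
    simp only [map_sub, ha, hb, inner_sub_left, inner_sub_right, inner_smul_left,
      real_inner_self_eq_norm_sq, na, nb, hab, hba]; simp
  obtain ⟨la, a4, a2⟩ := nu_moment hν a (by rw [qa]; exact hs)
  obtain ⟨lb, b4, b2⟩ := nu_moment hν b (by rw [qb]; exact ht)
  obtain ⟨lp, p4, p2⟩ := nu_moment hν (a+b) (by rw [q1]; positivity)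
  obtain ⟨lm, m4, m2⟩ := nu_moment hν (a-b) (by rw [q2]; positivity)
  have i4 : ∀ {f : H → ℝ}, MemLp f 4 ν → Integrable (fun x => f x^4) ν := by
    intro f hf
    have := hf.integrable_norm_pow (p := 4) (by norm_num)
    refine this.congr (ae_of_all _ fun x => ?_)
    simp only [Real.norm_eq_abs]
    exact (show Even 4 by decide).pow_abs _
  have i2 : ∀ {f : H → ℝ}, MemLp f 4 ν → Integrable (fun x => f x^2) ν := by
    intro f hf
    exact (hf.mono_exponent (by norm_num)).integrable_sq
  have hM : MemLp (fun x => ⟪x, a⟫ * ⟪x, b⟫) 2 ν := by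
    have ht : ENNReal.HolderTriple 4 4 2 := by
      constructor
      rw [← ENNReal.toReal_eq_toReal_iff' (by simp) (by simp), ENNReal.toReal_add (by simp) (by simp)]
      simp; norm_num
    exact lb.mul la
  refine ⟨hM, ?_, ?_⟩
  · have e : ∀ x : H, ⟪x, a⟫ * ⟪x, b⟫ = (1/4) * (⟪x, a+b⟫^2 - ⟪x, a-b⟫^2) := by
      intro x; rw [inner_add_right, inner_sub_right]; ring
    simp_rw [e]
    rw [integral_const_mul, integral_sub (i2 lp) (i2 lm), p2, m2, q1, q2]; ring
  · have e : ∀ x : H, (⟪x, a⟫ * ⟪x, b⟫)^2 = (1/12) * ((⟪x, a+b⟫^4 + ⟪x, a-b⟫^4) - 2 * (⟪x,a⟫^4 + ⟪x,b⟫^4)) := by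
      intro x; rw [inner_add_right, inner_sub_right]; ring
    simp_rw [e]
    have k1 : Integrable (fun x : H => ⟪x, a+b⟫^4 + ⟪x, a-b⟫^4) ν := (i4 lp).add (i4 lm)
    have k2 : Integrable (fun x : H => 2 * (⟪x, a⟫^4 + ⟪x, b⟫^4)) ν := ((i4 la).add (i4 lb)).const_mul 2
    rw [integral_const_mul, integral_sub k1 k2,
      integral_const_mul, integral_add (i4 lp) (i4 lm), integral_add (i4 la) (i4 lb), p4, m4, a4, b4, q1, q2, qa, qb]
    ring

lemma pi_cross [CompleteSpace H] [MeasurableSpace H] [BorelSpace H] {ν : Measure H} {T : H →L[ℝ] H}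
    (hν : IsGaussian ν T) (n : ℕ) (hn : 1 ≤ n)
    (a b : H) (s t : ℝ) (hs : 0 ≤ s) (ht : 0 ≤ t) (ha : T a = s • a) (hb : T b = t • b)
    (na : ‖a‖ = 1) (nb : ‖b‖ = 1) (hab : ⟪a, b⟫ = 0) :
    Integrable (fun x : Fin n → H => ⟪a, (sampleCov x - T) b⟫^2) (Measure.pi fun _ : Fin n => ν) ∧
    ∫ x : Fin n → H, ⟪a, (sampleCov x - T) b⟫^2 ∂(Measure.pi fun _ : Fin n => ν) = s * t / n := by
  have := hν.1
  obtain ⟨hM, h1, h2⟩ := nu_cross hν a b s t hs ht ha hb na nb hab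
  have hn0 : (0:ℝ) < n := by exact_mod_cast hn
  have e : ∀ x : Fin n → H, ⟪a, (sampleCov x - T) b⟫ = (n:ℝ)⁻¹ * ∑ k, ⟪x k, a⟫ * ⟪x k, b⟫ := by
    intro x
    rw [sub_apply, inner_sub_right, hb, inner_smul_right, hab, mul_zero, sub_zero, real_inner_comm,
      sampleCov_inner]
    simp_rw [mul_comm]
  set Y : H → ℝ := fun x => ⟪x, a⟫ * ⟪x, b⟫ with hY
  have hpi : ∀ k : Fin n, MemLp (fun x : Fin n → H => Y (x k)) 2 (Measure.pi fun _ : Fin n => ν) :=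
    fun k => hM.comp_measurePreserving (measurePreserving_eval _ k)
  have hsumL : MemLp (∑ k, fun x : Fin n → H => Y (x k)) 2 (Measure.pi fun _ : Fin n => ν) :=
    memLp_finsetSum' _ fun k _ => hpi k
  have hv := variance_sum_pi (ι := Fin n) (μ := fun _ => ν) (X := fun _ => Y) (fun _ => hM)
  have hmean : ∫ x : Fin n → H, (∑ k, fun x : Fin n → H => Y (x k)) x ∂(Measure.pi fun _ : Fin n => ν) = 0 := by
    simp only [Finset.sum_apply]
    rw [integral_finsetSum _ fun k _ => (hpi k).integrable (by norm_num)]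
    apply Finset.sum_eq_zero
    intro k _
    rw [integral_comp_eval (μ := fun _ : Fin n => ν) (f := Y) hM.aestronglyMeasurable]
    exact h1
  rw [variance_of_integral_eq_zero hsumL.aestronglyMeasurable.aemeasurable hmean] at hv
  have hvY : Var[Y; ν] = s * t := by
    rw [variance_of_integral_eq_zero hM.aestronglyMeasurable.aemeasurable h1]; exact h2
  simp only [hvY, Finset.sum_const, Finset.card_univ, Fintype.card_fin, nsmul_eq_mul] at hv
  have hi := hsumL.integrable_sq
  simp only [Finset.sum_apply] at hi hv
  simp_rw [e, mul_pow]
  refine ⟨hi.const_mul _, ?_⟩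
  rw [integral_const_mul]
  have : ∫ x : Fin n → H, (∑ k, Y (x k))^2 ∂(Measure.pi fun _ : Fin n => ν) = n * (s * t) := hv
  rw [this]; field_simp

end

section

variable {H : Type*} [NormedAddCommGroup H] [InnerProductSpace ℝ H]

lemma int_tsum {α ι : Type*} [MeasurableSpace α] [Countable ι] (μ : Measure α) (f : ι → α → ℝ)
    (hm : ∀ i, Measurable (f i)) (h0 : ∀ i x, 0 ≤ f i x) (hi : ∀ i, Integrable (f i) μ)
    (hs : ∀ x, Summable fun i => f i x) (hS : Summable fun i => ∫ x, f i x ∂μ) :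
    Integrable (fun x => ∑' i, f i x) μ ∧ ∫ x, ∑' i, f i x ∂μ = ∑' i, ∫ x, f i x ∂μ := by
  have e : ∀ x, ENNReal.ofReal (∑' i, f i x) = ∑' i, ENNReal.ofReal (f i x) := fun x =>
    ENNReal.ofReal_tsum_of_nonneg (fun i => h0 i x) (hs x)
  have p0 : ∀ x, 0 ≤ ∑' i, f i x := fun x => tsum_nonneg fun i => h0 i x
  have hl : ∫⁻ x, ENNReal.ofReal (∑' i, f i x) ∂μ = ENNReal.ofReal (∑' i, ∫ x, f i x ∂μ) := by
    simp_rw [e]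
    rw [lintegral_tsum (fun i => (hm i).ennreal_ofReal.aemeasurable),
      ENNReal.ofReal_tsum_of_nonneg (fun i => integral_nonneg (h0 i)) hS]
    congr 1; funext i
    rw [ofReal_integral_eq_lintegral_ofReal (hi i) (ae_of_all _ (h0 i))]
  have hme : Measurable fun x => ∑' i, f i x := by
    have : (fun x => ∑' i, f i x) = fun x => (∑' i, ENNReal.ofReal (f i x)).toReal := by
      funext x; rw [← e, ENNReal.toReal_ofReal (p0 x)]
    rw [this]
    exact (Measurable.tsum fun i => (hm i).ennreal_ofReal).ennreal_toReal
  constructor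
  · refine ⟨hme.aestronglyMeasurable, ?_⟩
    rw [hasFiniteIntegral_iff_ofReal (ae_of_all _ p0), hl]
    exact ENNReal.ofReal_lt_top
  · rw [integral_eq_lintegral_of_nonneg_ae (ae_of_all _ p0) hme.aestronglyMeasurable, hl,
      ENNReal.toReal_ofReal (tsum_nonneg fun i => integral_nonneg (h0 i))]

lemma Z_final {J : Type*} [DecidableEq J] [CompleteSpace H] [MeasurableSpace H] [BorelSpace H] {ν : Measure H} {T : H →L[ℝ] H}
    (hν : IsGaussian ν T) (n : ℕ) (hn : 1 ≤ n) (e : HilbertBasis J ℝ H) (ev : J → ℝ)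
    (hT : ∀ i, T (e i) = ev i • e i) (hev : ∀ i, 0 ≤ ev i) (hsum : Summable ev) (o : J)
    (g : ℝ) (hg : 0 < g) (hgap : ∀ j, j ≠ o → g ≤ |ev o - ev j|) :
    ∃ Z : (Fin n → H) → ℝ, Integrable Z (Measure.pi fun _ : Fin n => ν) ∧
      ∫ x, Z x ∂(Measure.pi fun _ : Fin n => ν) =
        (n:ℝ)⁻¹ * ∑' j, (if j = o then 0 else (ev o - ev j)⁻¹^2 * (ev j * ev o)) ∧
      ∀ x : Fin n → H, (∀ k j, ev j = 0 → ⟪x k, e j⟫ = 0) →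
        ∑' j, (if j = o then 0 else (ev o - ev j)⁻¹^2 * ⟪e j,(sampleCov x - T) (e o)⟫^2) = Z x := by
  have := hν.1
  have hn0 : (0:ℝ) < n := by exact_mod_cast hn
  set c : J → ℝ := fun j => if j = o then 0 else (ev o - ev j)⁻¹^2 with hc
  have c0 : ∀ j, 0 ≤ c j := by intro j; simp only [hc]; split_ifs <;> positivity
  have cb : ∀ j, c j ≤ g⁻¹^2 := by
    intro j; simp only [hc]; split_ifs with h
    · positivity
    · rw [← sq_abs (ev o - ev j)⁻¹, abs_inv]
      have := hgap j h
      gcongr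
  have r1 : ∀ (j : J) (y : ℝ), (if j = o then 0 else (ev o - ev j)⁻¹^2 * y) = c j * y := by
    intro j y; simp only [hc]; split_ifs <;> simp
  simp_rw [r1]
  have hcount : (Function.support ev).Countable := hsum.countable_support
  have : Countable (Function.support ev) := hcount.to_subtype
  set f : Function.support ev → (Fin n → H) → ℝ := fun j x => c j * ⟪e j,(sampleCov x - T) (e o)⟫^2 with hf
  have horth := e.orthonormal
  have hint : ∀ j : Function.support ev, Integrable (f j) (Measure.pi fun _ : Fin n => ν) ∧
      ∫ x, f j x ∂(Measure.pi fun _ : Fin n => ν) = (n:ℝ)⁻¹ * (c j * (ev j * ev o)) := by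
    intro j
    by_cases h : (j:J) = o
    · have : c j = 0 := by simp [hc, h]
      simp [hf, this]
    · obtain ⟨h1, h2⟩ := pi_cross hν n hn (e j) (e o) (ev j) (ev o) (hev _) (hev _) (hT _) (hT _)
        (horth.1 _) (horth.1 _) (horth.2 h)
      refine ⟨h1.const_mul _, ?_⟩
      simp only [hf]
      rw [integral_const_mul, h2]; ring
  have hmeas : ∀ j, Measurable (f j) := by
    intro j
    have : ∀ x : Fin n → H, ⟪e j,(sampleCov x - T) (e o)⟫ =
        (n:ℝ)⁻¹ * (∑ k, ⟪x k, e o⟫ * ⟪x k, e j⟫) - ⟪e j, T (e o)⟫ := by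
      intro x
      rw [sub_apply, inner_sub_right, real_inner_comm (sampleCov x (e o)), sampleCov_inner]
    simp only [hf, this]
    have hm := fun (k : Fin n) (u : H) => meas_inner_pi (n := n) k u
    refine Measurable.const_mul (((Measurable.const_mul (Finset.measurable_sum _ fun k _ => (hm k _).mul (hm k _)) _).sub_const _).pow_const 2) _
  have hsx : ∀ x, Summable fun j => f j x := by
    intro x
    have h1 : Summable fun j => g⁻¹^2 * ⟪e j,(sampleCov x - T) (e o)⟫^2 := (hb_norm_sq e _).summable.mul_left _
    have h2 := h1.subtype (Function.support ev)
    refine Summable.of_nonneg_of_le (fun j => mul_nonneg (c0 _) (sq_nonneg _)) (fun j => ?_) h2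
    exact mul_le_mul_of_nonneg_right (cb _) (sq_nonneg _)
  have hsI : Summable fun j : J => (n:ℝ)⁻¹ * (c j * (ev j * ev o)) := by
    apply Summable.mul_left
    refine Summable.of_nonneg_of_le (fun j => mul_nonneg (c0 _) (mul_nonneg (hev _) (hev _)))
      (fun j => mul_le_mul_of_nonneg_right (cb _) (mul_nonneg (hev _) (hev _))) ((hsum.mul_right (ev o)).mul_left _)
  obtain ⟨i1, i2⟩ := int_tsum (Measure.pi fun _ : Fin n => ν) f hmeas
    (fun j x => mul_nonneg (c0 _) (sq_nonneg _)) (fun j => (hint j).1) hsx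
    (by simp_rw [fun j => (hint j).2]; exact hsI.subtype _)
  refine ⟨_, i1, ?_, ?_⟩
  · rw [i2]
    simp_rw [fun j => (hint j).2]
    rw [← tsum_mul_left]
    apply tsum_subtype_eq_of_support_subset (f := fun j => (n:ℝ)⁻¹ * (c j * (ev j * ev o)))
    intro j hj
    simp only [Function.mem_support] at hj ⊢
    intro h; apply hj; simp [h]
  · intro x hx
    symm
    apply tsum_subtype_eq_of_support_subset (f := fun j => c j * ⟪e j,(sampleCov x - T) (e o)⟫^2)
    intro j hj
    simp only [Function.mem_support] at hj ⊢
    intro h; apply hj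
    by_cases hjo : j = o
    · have : c j = 0 := by simp [hc, hjo]
      simp [this]
    have : ⟪e j,(sampleCov x - T) (e o)⟫ = 0 := by
      rw [sub_apply, inner_sub_right, real_inner_comm (sampleCov x (e o)), sampleCov_inner, hT,
        inner_smul_right, horth.2 hjo]
      simp [fun k => hx k j h]
    rw [this]; ring

end

section

variable {H : Type*} [NormedAddCommGroup H] [InnerProductSpace ℝ H]

lemma unit_exists (V : Submodule ℝ H) (h : 0 < Module.finrank ℝ V) :
    Nonempty {x : H // x ∈ V ∧ ‖x‖ = 1} := by
  have : FiniteDimensional ℝ V := FiniteDimensional.of_finrank_pos h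
  have : Nontrivial V := Module.finrank_pos_iff.mp h
  obtain ⟨y, hy⟩ := exists_ne (0 : V)
  have hy' : (y : H) ≠ 0 := by simpa using hy
  exact ⟨⟨(‖(y:H)‖)⁻¹ • (y:H), V.smul_mem _ y.2, by
    rw [norm_smul, norm_inv, norm_norm, inv_mul_cancel₀ (norm_ne_zero_iff.mpr hy')]⟩⟩

lemma quad_abs_le (A : H →L[ℝ] H) (x : H) (hx : ‖x‖ = 1) : |⟪A x, x⟫| ≤ ‖A‖ := by
  calc |⟪A x, x⟫| ≤ ‖A x‖ * ‖x‖ := abs_real_inner_le_norm _ _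
    _ ≤ ‖A‖ * ‖x‖ * ‖x‖ := by gcongr; exact A.le_opNorm x
    _ = ‖A‖ := by rw [hx]; ring

lemma bddB (A : H →L[ℝ] H) (V : Submodule ℝ H) :
    BddBelow (Set.range fun x : {x : H // x ∈ V ∧ ‖x‖ = 1} => ⟪A x.1, x.1⟫) := by
  refine ⟨-‖A‖, ?_⟩
  rintro _ ⟨x, rfl⟩
  exact (abs_le.mp (quad_abs_le A x.1 x.2.2)).1

lemma bddA (A : H →L[ℝ] H) (j : ℕ) :
    BddAbove (Set.range fun V : {V : Submodule ℝ H // Module.finrank ℝ V = j + 1} =>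
      ⨅ x : {x : H // x ∈ V.1 ∧ ‖x‖ = 1}, ⟪A x.1, x.1⟫) := by
  refine ⟨‖A‖, ?_⟩
  rintro _ ⟨V, rfl⟩
  obtain ⟨x⟩ := unit_exists V.1 (by rw [V.2]; omega)
  exact (ciInf_le (bddB A V.1) x).trans (abs_le.mp (quad_abs_le A x.1 x.2.2)).2

lemma lam_ge (A : H →L[ℝ] H) (j : ℕ) (V : Submodule ℝ H) (hV : Module.finrank ℝ V = j + 1) (c : ℝ)
    (h : ∀ x ∈ V, ‖x‖ = 1 → c ≤ ⟪A x, x⟫) : c ≤ lam A j := by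
  have := unit_exists V (by rw [hV]; omega)
  refine le_ciSup_of_le (bddA A j) ⟨V, hV⟩ ?_
  exact le_ciInf fun x => h x.1 x.2.1 x.2.2

lemma lam_le (A : H →L[ℝ] H) (j : ℕ) (V0 : Submodule ℝ H) (hV : Module.finrank ℝ V0 = j + 1) (c : ℝ)
    (h : ∀ V : Submodule ℝ H, Module.finrank ℝ V = j + 1 → ∃ x ∈ V, ‖x‖ = 1 ∧ ⟪A x, x⟫ ≤ c) :
    lam A j ≤ c := by
  have : Nonempty {V : Submodule ℝ H // Module.finrank ℝ V = j + 1} := ⟨⟨V0, hV⟩⟩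
  refine ciSup_le fun V => ?_
  obtain ⟨x, h1, h2, h3⟩ := h V.1 V.2
  exact ciInf_le_of_le (bddB A V.1) ⟨x, h1, h2⟩ h3

lemma weyl_le (A B : H →L[ℝ] H) (j : ℕ) : lam A j ≤ lam B j + ‖A - B‖ := by
  rcases isEmpty_or_nonempty {V : Submodule ℝ H // Module.finrank ℝ V = j + 1} with he | hne
  · simp [lam, Real.iSup_of_isEmpty]
  · refine ciSup_le fun V => ?_
    have := unit_exists V.1 (by rw [V.2]; omega)
    have h1 : (⨅ x : {x : H // x ∈ V.1 ∧ ‖x‖ = 1}, ⟪A x.1, x.1⟫) - ‖A - B‖ ≤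
        ⨅ x : {x : H // x ∈ V.1 ∧ ‖x‖ = 1}, ⟪B x.1, x.1⟫ := by
      refine le_ciInf fun x => ?_
      have h2 := ciInf_le (bddB A V.1) x
      have h3 := (abs_le.mp (quad_abs_le (A - B) x.1 x.2.2)).2
      rw [sub_apply, inner_sub_left] at h3
      linarith
    have h4 := le_ciSup (bddA B j) V
    simp only [lam]
    linarith

lemma weyl (A B : H →L[ℝ] H) (j : ℕ) : |lam A j - lam B j| ≤ ‖A - B‖ := by
  have h1 := weyl_le A B j
  have h2 := weyl_le B A j
  rw [norm_sub_rev] at h2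
  rw [abs_le]; constructor <;> linarith

lemma unit_perp {κ : Type*} [Fintype κ] (j : ℕ) (hκ : Fintype.card κ ≤ j) (w : κ → H) (V : Submodule ℝ H)
    (hV : Module.finrank ℝ V = j + 1) : ∃ x ∈ V, ‖x‖ = 1 ∧ ∀ i, ⟪w i, x⟫ = 0 := by
  have : FiniteDimensional ℝ V := FiniteDimensional.of_finrank_pos (by rw [hV]; omega)
  let f : V →ₗ[ℝ] (κ → ℝ) := LinearMap.pi fun i => ((innerSL ℝ (w i)).toLinearMap).comp V.subtype
  have hk : LinearMap.ker f ≠ ⊥ := LinearMap.ker_ne_bot_of_finrank_lt (by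
    rw [Module.finrank_fintype_fun_eq_card, hV]; omega)
  obtain ⟨y, hy, hy0⟩ := (Submodule.ne_bot_iff _).mp hk
  have hy' : (y : H) ≠ 0 := by simpa using hy0
  refine ⟨(‖(y:H)‖)⁻¹ • (y:H), V.smul_mem _ y.2, ?_, ?_⟩
  · rw [norm_smul, norm_inv, norm_norm, inv_mul_cancel₀ (norm_ne_zero_iff.mpr hy')]
  · intro i
    have := congrFun (LinearMap.mem_ker.mp hy) i
    have h2 : ⟪w i, (y:H)⟫ = 0 := this
    rw [inner_smul_right, h2, mul_zero]

lemma quad_hasSum {J : Type*} [CompleteSpace H] (e : HilbertBasis J ℝ H) (A : H →L[ℝ] H)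
    (hs : ∀ x y : H, ⟪A x, y⟫ = ⟪x, A y⟫) (a : J → ℝ) (hA : ∀ i, A (e i) = a i • e i) (x : H) :
    HasSum (fun i => a i * ⟪e i, x⟫^2) ⟪A x, x⟫ := by
  have := e.hasSum_inner_mul_inner (A x) x
  have e1 : (fun i => a i * ⟪e i, x⟫^2) = fun i => ⟪A x, e i⟫ * ⟪e i, x⟫ := by
    funext i
    rw [hs, hA, inner_smul_right, real_inner_comm (e i) x]; ring
  rw [e1]; exact this

lemma diag_ge {J : Type*} [CompleteSpace H] (e : HilbertBasis J ℝ H) (A : H →L[ℝ] H)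
    (hs : ∀ x y : H, ⟪A x, y⟫ = ⟪x, A y⟫) (a : J → ℝ) (hA : ∀ i, A (e i) = a i • e i)
    (j : ℕ) (F : Finset J) (hF : F.card = j + 1) (c : ℝ) (hc : ∀ i ∈ F, c ≤ a i) :
    c ≤ lam A j ∧ ∃ V : Submodule ℝ H, Module.finrank ℝ V = j + 1 := by
  have hl : LinearIndependent ℝ fun i : F => e i :=
    e.orthonormal.linearIndependent.comp _ Subtype.val_injective
  have hd := finrank_span_eq_card hl
  rw [Fintype.card_coe, hF] at hd
  refine ⟨lam_ge A j _ hd c ?_, _, hd⟩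
  intro x hx h1
  have h0 : ∀ i, i ∉ F → ⟪e i, x⟫ = 0 := by
    intro i hi
    clear h1
    induction hx using Submodule.span_induction with
    | mem y hy =>
      obtain ⟨k, rfl⟩ := hy
      exact e.orthonormal.2 (fun h => hi (h ▸ k.2))
    | zero => simp
    | add y z _ _ hy hz => rw [inner_add_right, hy, hz, add_zero]
    | smul t y _ hy => rw [inner_smul_right, hy, mul_zero]
  have q := quad_hasSum e A hs a hA x
  have q2 := (hb_norm_sq e x).mul_left c
  rw [h1] at q2
  have := hasSum_le (fun i => ?_) q2 q
  · simpa using this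
  · by_cases hi : i ∈ F
    · exact mul_le_mul_of_nonneg_right (hc i hi) (sq_nonneg _)
    · simp [h0 i hi]

lemma diag_le {J : Type*} [CompleteSpace H] (e : HilbertBasis J ℝ H) (A : H →L[ℝ] H)
    (hs : ∀ x y : H, ⟪A x, y⟫ = ⟪x, A y⟫) (a : J → ℝ) (hA : ∀ i, A (e i) = a i • e i)
    (j : ℕ) (V0 : Submodule ℝ H) (hV : Module.finrank ℝ V0 = j + 1)
    (F : Finset J) (hF : F.card ≤ j) (c : ℝ) (hc : ∀ i ∉ F, a i ≤ c) :
    lam A j ≤ c := by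
  refine lam_le A j V0 hV c fun V hV => ?_
  obtain ⟨x, hx, h1, h2⟩ := unit_perp (κ := F) j (by rwa [Fintype.card_coe]) (fun i => e i) V hV
  refine ⟨x, hx, h1, ?_⟩
  have q := quad_hasSum e A hs a hA x
  have q2 := (hb_norm_sq e x).mul_left c
  rw [h1] at q2
  have := hasSum_le (fun i => ?_) q q2
  · simpa using this
  · by_cases hi : i ∈ F
    · simp [h2 ⟨i, hi⟩]
    · exact mul_le_mul_of_nonneg_right (hc i hi) (sq_nonneg _)

lemma eig_exists [CompleteSpace H] {n : ℕ} (x : Fin n → H) (j : ℕ) (V0 : Submodule ℝ H)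
    (hV : Module.finrank ℝ V0 = j + 1) :
    ∃ v : H, ‖v‖ = 1 ∧ sampleCov x v = lam (sampleCov x) j • v := by
  set A := sampleCov x with hA
  have hs : ∀ u w : H, ⟪A u, w⟫ = ⟪u, A w⟫ := fun u w => sampleCov_symm x u w
  have hpos : ∀ u : H, 0 ≤ ⟪A u, u⟫ := by
    intro u; rw [hA, sampleCov_inner]
    exact mul_nonneg (by positivity) (Finset.sum_nonneg fun k _ => mul_self_nonneg _)
  have : FiniteDimensional ℝ V0 := FiniteDimensional.of_finrank_pos (by rw [hV]; omega)
  set W : Submodule ℝ H := Submodule.span ℝ (Set.range x) with hW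
  have : FiniteDimensional ℝ W := FiniteDimensional.span_of_finite ℝ (Set.finite_range x)
  set U : Submodule ℝ H := V0 ⊔ W with hU
  have : FiniteDimensional ℝ U := Submodule.finiteDimensional_sup V0 W
  have hAU : ∀ u : H, A u ∈ U := by
    intro u
    apply (le_sup_right : W ≤ U)
    simp only [hA, sampleCov, smul_apply, sum_apply]
    refine Submodule.smul_mem _ _ (Submodule.sum_mem _ fun k _ => ?_)
    simp only [outer, ContinuousLinearMap.smulRight_apply]
    exact Submodule.smul_mem _ _ (Submodule.subset_span ⟨k, rfl⟩)
  let AU : U →ₗ[ℝ] U := (A.toLinearMap.comp U.subtype).codRestrict U (fun u => hAU u)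
  have hAUs : AU.IsSymmetric := fun u w => hs u w
  set d := Module.finrank ℝ U with hd
  have hjd : j < d := by
    have : Module.finrank ℝ V0 ≤ Module.finrank ℝ U := Submodule.finrank_mono le_sup_left
    omega
  let b := hAUs.eigenvectorBasis hd.symm
  let l := hAUs.eigenvalues hd.symm
  have hl : Antitone l := hAUs.eigenvalues_antitone hd.symm
  have hb : ∀ i, A (b i : H) = l i • (b i : H) := by
    intro i
    have := hAUs.apply_eigenvectorBasis hd.symm i
    exact congrArg Subtype.val this
  have hbo : Orthonormal ℝ fun i => (b i : H) := b.orthonormal.comp_linearIsometry U.subtypeₗᵢ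
  have hl0 : ∀ i, 0 ≤ l i := by
    intro i
    have := hpos (b i : H)
    rw [hb, inner_smul_left, real_inner_self_eq_norm_sq, hbo.1 i] at this
    simpa using this
  have hbs : Orthonormal ℝ ((↑) : Set.range (fun i => (b i : H)) → H) := hbo.toSubtypeRange
  obtain ⟨w, e, hsw, he⟩ := hbs.exists_hilbertBasis_extension
  let f : Fin d → w := fun i => ⟨b i, hsw ⟨i, rfl⟩⟩
  have hfe : ∀ i, e (f i) = b i := fun i => by rw [he]
  have hfi : Function.Injective f := by
    intro i k h
    have : (b i : H) = b k := by rw [← hfe, ← hfe, h]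
    exact hbo.linearIndependent.injective this
  have hperp : ∀ i, (i ∉ Set.range f) → A (e i) = 0 := by
    intro i hi
    have hp : ∀ u ∈ U, ⟪u, e i⟫ = 0 := by
      intro u hu
      have h1 := b.sum_repr ⟨u, hu⟩
      have h2 : u = ∑ k, b.repr ⟨u, hu⟩ k • (b k : H) := by
        have := congrArg Subtype.val h1
        simpa using this.symm
      rw [h2, sum_inner]
      refine Finset.sum_eq_zero fun k _ => ?_
      rw [inner_smul_left, ← hfe, e.orthonormal.2 (fun h => hi ⟨k, h⟩), mul_zero]
    have : ⟪A (e i), A (e i)⟫ = 0 := by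
      rw [← hs, hp _ (hAU _)]
    exact inner_self_eq_zero.mp this
  classical
  let a : w → ℝ := fun i => if h : i ∈ Set.range f then l h.choose else 0
  have haf : ∀ i, a (f i) = l i := by
    intro i
    have h : f i ∈ Set.range f := ⟨i, rfl⟩
    have : h.choose = i := hfi h.choose_spec
    simp only [a, dif_pos h, this]
  have haA : ∀ i, A (e i) = a i • e i := by
    intro i
    by_cases h : i ∈ Set.range f
    · obtain ⟨k, rfl⟩ := h
      rw [haf, hfe, hb]
    · rw [hperp i h]; simp only [a, dif_neg h, zero_smul]
  have hge := diag_ge e A hs a haA j ((Finset.univ.filter fun i : Fin d => i ≤ ⟨j, hjd⟩).map ⟨f, hfi⟩)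
    (by
      rw [Finset.card_map]
      have : (Finset.univ.filter fun i : Fin d => i ≤ ⟨j, hjd⟩) = Finset.Iic ⟨j, hjd⟩ := by ext; simp
      rw [this, Fin.card_Iic]) (l ⟨j, hjd⟩) (by
      intro i hi
      obtain ⟨k, hk, rfl⟩ := Finset.mem_map.mp hi
      simp only [Function.Embedding.coeFn_mk, haf]
      exact hl (Finset.mem_filter.mp hk).2)
  have hle := diag_le e A hs a haA j V0 hV ((Finset.univ.filter fun i : Fin d => i < ⟨j, hjd⟩).map ⟨f, hfi⟩)
    (by
      rw [Finset.card_map]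
      have : (Finset.univ.filter fun i : Fin d => i < ⟨j, hjd⟩) = Finset.Iio ⟨j, hjd⟩ := by ext; simp
      rw [this, Fin.card_Iio]) (l ⟨j, hjd⟩) (by
      intro i hi
      by_cases h : i ∈ Set.range f
      · obtain ⟨k, rfl⟩ := h
        rw [haf]
        apply hl
        by_contra hk
        exact hi (Finset.mem_map.mpr ⟨k, Finset.mem_filter.mpr ⟨Finset.mem_univ _, not_le.mp hk⟩, rfl⟩)
      · simp only [a, dif_neg h]; exact hl0 _)
  refine ⟨b ⟨j, hjd⟩, hbo.1 _, ?_⟩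
  rw [le_antisymm hle hge.1, hb]

end

section

variable {H : Type*} [NormedAddCommGroup H] [InnerProductSpace ℝ H]

lemma lam_diag {J : Type*} [CompleteSpace H] (e : HilbertBasis J ℝ H) (T : H →L[ℝ] H)
    (hs : ∀ x y : H, ⟪T x, y⟫ = ⟪x, T y⟫) (ev : J → ℝ) (hT : ∀ i, T (e i) = ev i • e i)
    (hsum : Summable ev) (o : J) (ho : 0 < ev o)
    (g : ℝ) (hg : 0 < g) (hgap : ∀ j, j ≠ o → g ≤ |ev o - ev j|) :
    ∃ big : Finset J, (∀ i, i ∈ big ↔ ev o < ev i) ∧ lam T big.card = ev o ∧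
      (∃ V : Submodule ℝ H, Module.finrank ℝ V = big.card + 1) ∧
      ∀ j, lam T j = ev o → j = big.card := by
  classical
  have hfin : {i | ev o < ev i}.Finite := by
    have h1 := hsum.tendsto_cofinite_zero.eventually (gt_mem_nhds ho)
    rw [Filter.eventually_cofinite] at h1
    refine h1.subset fun i hi => ?_
    simp only [mem_setOf_eq] at hi ⊢
    linarith
  have hmem : ∀ i, i ∈ hfin.toFinset ↔ ev o < ev i := by intro i; simp
  set big := hfin.toFinset with hbig
  have hob : o ∉ big := by rw [hmem]; exact lt_irrefl _
  have hlow : ∀ i, i ∉ big → i ≠ o → ev i ≤ ev o - g := by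
    intro i hi hio
    rw [hmem, not_lt] at hi
    have := hgap i hio
    rw [abs_of_nonneg (by linarith)] at this
    linarith
  have hup : ∀ i ∈ big, ev o + g ≤ ev i := by
    intro i hi
    have h2 := (hmem i).mp hi
    have := hgap i (fun h => hob (h ▸ hi))
    rw [abs_of_neg (by linarith)] at this
    linarith
  have hge := diag_ge e T hs ev hT big.card (insert o big) (Finset.card_insert_of_notMem hob) (ev o) (by
    intro i hi
    rcases Finset.mem_insert.mp hi with rfl | h
    · exact le_rfl
    · exact ((hmem i).mp h).le)
  obtain ⟨hge1, V0, hV0⟩ := hge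
  refine ⟨big, hmem, le_antisymm ?_ hge1, ⟨V0, hV0⟩, ?_⟩
  · exact diag_le e T hs ev hT _ V0 hV0 big le_rfl _ (fun i hi => not_lt.mp fun h => hi ((hmem i).mpr h))
  · intro j hj
    rcases lt_trichotomy j big.card with h | h | h
    · exfalso
      obtain ⟨F, hF, hFc⟩ := Finset.exists_subset_card_eq (s := big) (n := j+1) h
      have := (diag_ge e T hs ev hT j F hFc (ev o + g) (fun i hi => hup i (hF hi))).1
      linarith
    · exact h
    · exfalso
      by_cases hne : ∃ V : Submodule ℝ H, Module.finrank ℝ V = j + 1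
      · obtain ⟨V, hV⟩ := hne
        have := diag_le e T hs ev hT j V hV (insert o big) (by rw [Finset.card_insert_of_notMem hob]; exact h)
          (ev o - g) (by
            intro i hi
            rw [Finset.mem_insert, not_or] at hi
            exact hlow i hi.2 hi.1)
        linarith
      · have : IsEmpty {V : Submodule ℝ H // Module.finrank ℝ V = j + 1} := ⟨fun V => hne ⟨V.1, V.2⟩⟩
        rw [lam, Real.iSup_of_isEmpty] at hj
        linarith

end

section

variable {H : Type*} [NormedAddCommGroup H] [InnerProductSpace ℝ H]

lemma not_spec [CompleteSpace H] {J : Type*} (e : HilbertBasis J ℝ H) (T : H →L[ℝ] H)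
    (hs : ∀ x y : H, ⟪T x, y⟫ = ⟪x, T y⟫) (ev : J → ℝ) (hT : ∀ i, T (e i) = ev i • e i)
    (t c : ℝ) (hc : 0 < c) (h : ∀ j, c ≤ |t - ev j|) : t ∉ spectrum ℝ T := by
  rw [spectrum.notMem_iff]
  rw [ContinuousLinearMap.isUnit_iff_bijective]
  have hap : ∀ x j, ⟪e j, (algebraMap ℝ (H →L[ℝ] H) t - T) x⟫ = (t - ev j) * ⟪e j, x⟫ := by
    intro x j
    rw [sub_apply, inner_sub_right, ContinuousLinearMap.algebraMap_apply, inner_smul_right, ← hs, hT, inner_smul_left]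
    simp; ring
  have hne : ∀ j, t - ev j ≠ 0 := by
    intro j hj
    have := h j
    rw [hj] at this; simp at this; linarith
  constructor
  · intro x y hxy
    refine hb_ext e x y fun j => ?_
    have := hap x j
    rw [hxy, hap] at this
    exact (mul_left_cancel₀ (hne j) this).symm
  · intro y
    obtain ⟨z, hz, -⟩ := resolvent_vec e (fun j => (t - ev j)⁻¹) c⁻¹ (by positivity)
      (fun j => by rw [abs_inv]; exact inv_anti₀ hc (h j)) y
    refine ⟨z, hb_ext e _ _ fun j => ?_⟩
    rw [hap, hz, mul_inv_cancel_left₀ (hne j)]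

lemma mem_spec [CompleteSpace H] (T : H →L[ℝ] H) (v : H) (hv : v ≠ 0) (t : ℝ) (h : T v = t • v) :
    t ∈ spectrum ℝ T := by
  rw [spectrum.mem_iff, ContinuousLinearMap.isUnit_iff_bijective]
  intro hb
  apply hv
  apply hb.1
  rw [sub_apply, ContinuousLinearMap.algebraMap_apply, h, sub_self, map_zero]

lemma gap_facts [CompleteSpace H] {J : Type*} (e : HilbertBasis J ℝ H) (T : H →L[ℝ] H)
    (hs : ∀ x y : H, ⟪T x, y⟫ = ⟪x, T y⟫) (ev : J → ℝ) (hT : ∀ i, T (e i) = ev i • e i)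
    (hev : ∀ j, 0 ≤ ev j) (hsum : Summable ev) (o : J) (ho : 0 < ev o) (hne : ∀ j, j ≠ o → ev j ≠ ev o) :
    (∀ j, j ≠ o → Metric.infDist (ev o) (spectrum ℝ T \ {ev o}) ≤ |ev o - ev j|) ∧
    ((∃ j, j ≠ o) → 0 < Metric.infDist (ev o) (spectrum ℝ T \ {ev o})) := by
  have hmem : ∀ j, j ≠ o → ev j ∈ spectrum ℝ T \ {ev o} := fun j hj =>
    ⟨mem_spec T (e j) (e.orthonormal.ne_zero j) _ (hT j), hne j hj⟩
  refine ⟨fun j hj => ?_, ?_⟩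
  · rw [← Real.dist_eq]
    exact Metric.infDist_le_dist_of_mem (hmem j hj)
  · rintro ⟨j1, hj1⟩
    have hfin : {i | ev o / 2 ≤ ev i}.Finite := by
      have h1 := hsum.tendsto_cofinite_zero.eventually (gt_mem_nhds (half_pos ho))
      rw [Filter.eventually_cofinite] at h1
      refine h1.subset fun i hi => ?_
      exact not_lt.mpr hi
    have hc : ∃ c, 0 < c ∧ ∀ j ∈ {i | ev o / 2 ≤ ev i} \ {o}, c ≤ |ev o - ev j| := by
      have hf2 := hfin.subset (diff_subset (t := {o}))
      rcases ({i | ev o / 2 ≤ ev i} \ {o}).eq_empty_or_nonempty with h0 | h0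
      · exact ⟨1, one_pos, by rw [h0]; simp⟩
      · obtain ⟨k, hk, hkm⟩ := Set.exists_min_image _ (fun j => |ev o - ev j|) hf2 h0
        exact ⟨|ev o - ev k|, abs_pos.mpr (sub_ne_zero.mpr (hne k hk.2).symm), hkm⟩
    obtain ⟨c, hc0, hc⟩ := hc
    have hc2 : ∀ j, j ≠ o → min c (ev o / 2) ≤ |ev o - ev j| := by
      intro j hj
      by_cases h : ev o / 2 ≤ ev j
      · exact (min_le_left _ _).trans (hc j ⟨h, hj⟩)
      · push Not at h
        refine (min_le_right _ _).trans ?_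
        rw [abs_of_pos (by linarith)]; linarith
    have hm : 0 < min c (ev o / 2) := lt_min hc0 (half_pos ho)
    set d := min c (ev o / 2)
    refine hm.trans_le ((Metric.le_infDist ⟨_, hmem j1 hj1⟩).mpr ?_)
    rintro t ⟨ht, hto⟩
    by_contra hlt
    push Not at hlt
    rw [Real.dist_eq] at hlt
    have hto' : t ≠ ev o := hto
    refine not_spec e T hs ev hT t (min (|t - ev o|) (d - |ev o - t|))
      (lt_min (abs_pos.mpr (sub_ne_zero.mpr hto')) (by linarith)) ?_ ht
    intro j
    by_cases hj : j = o
    · rw [hj]; exact min_le_left _ _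
    · refine (min_le_right _ _).trans ?_
      have := hc2 j hj
      have := abs_sub_le (ev o) t (ev j)
      linarith

end

section

variable {H : Type*} [NormedAddCommGroup H] [InnerProductSpace ℝ H]

lemma sum_helper {w : Type*} (m : ℕ → ℕ) (f : (Σ s, Fin (m s)) → w) (hf : Function.Injective f)
    (φ : w → ℝ) (ψ : ℕ → ℝ) (h1 : ∀ i, φ (f i) = ψ i.1) (h0 : ∀ j, j ∉ Set.range f → φ j = 0)
    (hψ : ∀ s, 0 ≤ ψ s) (hs : Summable fun s => ψ s * m s) :
    Summable φ ∧ ∑' j, φ j = ∑' s, ψ s * m s := by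
  have hsup : Function.support φ ⊆ Set.range f := by
    intro j hj; by_contra h; exact hj (h0 j h)
  have h2 : φ ∘ f = fun i => ψ i.1 := funext h1
  have h3 : ∀ s, ∑' _k : Fin (m s), ψ s = ψ s * m s := by
    intro s; rw [tsum_fintype]; simp [mul_comm]
  have h4 : Summable fun i : (Σ s, Fin (m s)) => ψ i.1 := by
    rw [summable_sigma_of_nonneg (fun i => hψ i.1)]
    refine ⟨fun s => Summable.of_finite, ?_⟩
    simp_rw [h3]; exact hs
  refine ⟨?_, ?_⟩
  · rw [← hf.summable_iff (fun j hj => h0 j hj), h2]; exact h4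
  · rw [← hf.tsum_eq hsup]
    have : (∑' i, φ (f i)) = ∑' i : (Σ s, Fin (m s)), ψ i.1 := tsum_congr h1
    rw [this, h4.tsum_sigma]
    exact tsum_congr h3

lemma bridge [CompleteSpace H] (S : CovOp H) (r : ℕ) (θ : H) (hθ : S.SimpleVec r θ) :
    ∃ (w : Set H) (e : HilbertBasis w ℝ H) (ev : w → ℝ) (o : w),
      (∀ x y : H, ⟪S.toCLM x, y⟫ = ⟪x, S.toCLM y⟫) ∧ (∀ i, S.toCLM (e i) = ev i • e i) ∧
      (∀ i, 0 ≤ ev i) ∧ Summable ev ∧ ∑' i, ev i = S.trace ∧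
      (∀ v : H, ⟪v, e o⟫^2 = ⟪v, θ⟫^2) ∧ ev o = S.μ r ∧ (∀ j, j ≠ o → ev j ≠ ev o) ∧
      (∀ [DecidableEq w], S.Ar r / 2 = ∑' j, (if j = o then 0 else (ev o - ev j)⁻¹^2 * (ev j * ev o))) := by
  classical
  have hsym : ∀ x y : H, ⟪S.toCLM x, y⟫ = ⟪x, S.toCLM y⟫ := by
    intro x y
    have h1 : HasSum (fun s => ⟪y, S.μ s • S.P s x⟫) ⟪y, S.toCLM x⟫ :=
      (S.decomp x).mapL (innerSL ℝ y)
    have h2 : HasSum (fun s => ⟪x, S.μ s • S.P s y⟫) ⟪x, S.toCLM y⟫ :=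
      (S.decomp y).mapL (innerSL ℝ x)
    have : (fun s => ⟪y, S.μ s • S.P s x⟫) = fun s => ⟪x, S.μ s • S.P s y⟫ := by
      funext s; rw [inner_smul_right, inner_smul_right, ← S.P_symm, real_inner_comm]
    rw [this] at h1
    rw [real_inner_comm]; exact h1.unique h2
  have hfd : ∀ s, FiniteDimensional ℝ (LinearMap.range (S.P s).toLinearMap) := S.P_finrank
  let b : ∀ s, OrthonormalBasis (Fin (S.m s)) ℝ (LinearMap.range (S.P s).toLinearMap) := fun s =>
    stdOrthonormalBasis ℝ _
  let u : (Σ s, Fin (S.m s)) → H := fun i => (b i.1 i.2 : H)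
  have hPu : ∀ i, S.P i.1 (u i) = u i := by
    intro i
    obtain ⟨y, hy⟩ := (b i.1 i.2).2
    have : u i = S.P i.1 y := hy.symm
    rw [this, S.P_idem]
  have hPu' : ∀ i s, s ≠ i.1 → S.P s (u i) = 0 := by
    intro i s hsi
    rw [← hPu i, S.P_orth s i.1 hsi]
  have huo : Orthonormal ℝ u := by
    constructor
    · intro i; exact (b i.1).orthonormal.1 i.2
    · rintro ⟨s, i⟩ ⟨t, k⟩ hik
      by_cases hst : s = t
      · subst hst
        have hik' : i ≠ k := fun h => hik (by rw [h])
        exact (b s).orthonormal.2 hik'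
      · change ⟪u ⟨s, i⟩, u ⟨t, k⟩⟫ = 0
        rw [← hPu ⟨s, i⟩, S.P_symm, hPu' ⟨t, k⟩ s hst, inner_zero_right]
  have hTu : ∀ i, S.toCLM (u i) = S.μ i.1 • u i := by
    intro i
    have h1 := hasSum_single (f := fun s => S.μ s • S.P s (u i)) i.1 (fun s hs => by
      rw [hPu' i s hs, smul_zero])
    rw [hPu] at h1
    exact (S.decomp (u i)).unique h1
  obtain ⟨w, e, hsw, he⟩ := huo.toSubtypeRange.exists_hilbertBasis_extension
  let f : (Σ s, Fin (S.m s)) → w := fun i => ⟨u i, hsw ⟨i, rfl⟩⟩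
  have hfe : ∀ i, e (f i) = u i := fun i => by rw [he]
  have hfi : Function.Injective f := by
    intro i k h
    have : u i = u k := by rw [← hfe, ← hfe, h]
    exact huo.linearIndependent.injective this
  have hperp : ∀ j, j ∉ Set.range f → S.toCLM (e j) = 0 := by
    intro j hj
    have hp : ∀ s, S.P s (e j) = 0 := by
      intro s
      have h1 : ∀ y : LinearMap.range (S.P s).toLinearMap, ⟪(y:H), e j⟫ = 0 := by
        intro y
        have h2 : (y:H) = ∑ k, (b s).repr y k • (b s k : H) := by
          have := congrArg Subtype.val ((b s).sum_repr y)
          simpa using this.symm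
        rw [h2, sum_inner]
        refine Finset.sum_eq_zero fun k _ => ?_
        have : (b s k : H) = e (f ⟨s, k⟩) := (hfe ⟨s, k⟩).symm
        rw [inner_smul_left, this, e.orthonormal.2 (fun h => hj ⟨_, h⟩), mul_zero]
      have h3 : ⟪S.P s (e j), S.P s (e j)⟫ = 0 := by
        rw [← S.P_symm, S.P_idem]
        exact h1 ⟨S.P s (e j), ⟨e j, rfl⟩⟩
      exact inner_self_eq_zero.mp h3
    have := S.decomp (e j)
    simp only [hp, smul_zero] at this
    exact this.unique hasSum_zero
  let ev : w → ℝ := fun j => ⟪S.toCLM (e j), e j⟫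
  have hevf : ∀ i, ev (f i) = S.μ i.1 := by
    intro i
    simp only [ev]
    rw [hfe, hTu, inner_smul_left, real_inner_self_eq_norm_sq, huo.1 i]; simp
  have hev0 : ∀ j, j ∉ Set.range f → ev j = 0 := by
    intro j hj; simp only [ev, hperp j hj, inner_zero_left]
  have hmr : S.m r = 1 := by
    have : LinearMap.range (S.P r).toLinearMap = Submodule.span ℝ {θ} := by
      ext y
      rw [Submodule.mem_span_singleton]
      constructor
      · rintro ⟨z, rfl⟩; exact ⟨⟪θ, z⟫, (hθ.2 z).symm⟩
      · rintro ⟨c, rfl⟩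
        refine ⟨c • θ, ?_⟩
        change S.P r (c • θ) = _
        rw [hθ.2, inner_smul_right, real_inner_self_eq_norm_sq, hθ.1]; simp
    rw [CovOp.m, this]
    exact finrank_span_singleton (by intro h; have := hθ.1; rw [h] at this; simp at this)
  let k0 : Fin (S.m r) := ⟨0, by omega⟩
  have hfo : ∀ i, f i = f ⟨r, k0⟩ ↔ i.1 = r := by
    intro i
    constructor
    · intro h; rw [hfi h]
    · obtain ⟨s, k⟩ := i
      rintro h
      simp only at h
      subst h
      have : k = k0 := by apply Fin.ext; have := k.2; have := k0.2; omega
      rw [this]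
  have hevn : ∀ j, 0 ≤ ev j := by
    intro j
    by_cases h : j ∈ Set.range f
    · obtain ⟨i, rfl⟩ := h
      rw [hevf]; exact (S.μ_pos _).le
    · rw [hev0 j h]
  have hsE := sum_helper S.m f hfi ev S.μ hevf hev0 (fun s => (S.μ_pos s).le) S.μm_summable
  refine ⟨w, e, ev, f ⟨r, k0⟩, hsym, ?_, hevn, hsE.1, hsE.2, ?_, hevf _, ?_, ?_⟩
  · intro j
    by_cases h : j ∈ Set.range f
    · obtain ⟨i, rfl⟩ := h
      rw [hevf, hfe, hTu]
    · rw [hev0 j h, hperp j h, zero_smul]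
  · intro v
    rw [hfe]
    have h1 : S.P r (u ⟨r, k0⟩) = u ⟨r, k0⟩ := hPu ⟨r, k0⟩
    rw [hθ.2] at h1
    have h2 : ‖u ⟨r, k0⟩‖ = 1 := huo.1 _
    rw [← h1, norm_smul, hθ.1, mul_one, Real.norm_eq_abs] at h2
    rw [← h1, inner_smul_right, mul_pow, ← sq_abs ⟪θ, _⟫, h2]; ring
  · intro j hj
    rw [hevf]
    by_cases h : j ∈ Set.range f
    · obtain ⟨i, rfl⟩ := h
      rw [hevf]
      intro h2
      exact hj ((hfo i).mpr (S.μ_anti.injective h2))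
    · rw [hev0 j h]; exact (S.μ_pos r).ne
  · intro inst
    have := sum_helper S.m f hfi
      (fun j => if j = f ⟨r, k0⟩ then 0 else (ev (f ⟨r, k0⟩) - ev j)⁻¹^2 * (ev j * ev (f ⟨r, k0⟩)))
      (fun s => if s = r then 0 else (S.μ r - S.μ s)⁻¹^2 * (S.μ s * S.μ r)) ?_ ?_ ?_ ?_
    · rw [this.2, CovOp.Ar, mul_div_cancel_left₀ _ two_ne_zero]
      refine tsum_congr fun s => ?_
      split_ifs
      · simp
      · rw [div_eq_mul_inv, inv_pow]; ring
    · intro i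
      simp only [hevf, hfo]
    · intro j hj
      simp only [hev0 j hj]; simp
    · intro s; split_ifs
      · exact le_rfl
      · have := S.μ_pos s; have := S.μ_pos r; positivity
    · have h2 : ∀ᶠ s in atTop, S.μ s < S.μ r / 2 :=
        S.μ_lim.eventually (gt_mem_nhds (half_pos (S.μ_pos r)))
      refine Summable.of_norm_bounded_eventually_nat (S.μm_summable.mul_left (4 * (S.μ r)⁻¹)) ?_
      filter_upwards [h2] with s hs2
      have p1 := S.μ_pos s
      have p2 := S.μ_pos r
      split_ifs
      · simp only [zero_mul, norm_zero]; positivity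
      · rw [Real.norm_of_nonneg (by positivity)]
        have h3 : (S.μ r - S.μ s)⁻¹ ≤ (S.μ r / 2)⁻¹ := inv_anti₀ (by linarith) (by linarith)
        have h4 : 0 ≤ (S.μ r - S.μ s)⁻¹ := inv_nonneg.mpr (by linarith)
        calc (S.μ r - S.μ s)⁻¹^2 * (S.μ s * S.μ r) * (S.m s:ℝ)
            ≤ (S.μ r / 2)⁻¹^2 * (S.μ s * S.μ r) * (S.m s:ℝ) := by gcongr
          _ = 4 * (S.μ r)⁻¹ * (S.μ s * (S.m s:ℝ)) := by field_simp; ring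

end

section

variable {H : Type*} [NormedAddCommGroup H] [InnerProductSpace ℝ H]

lemma ulam_step {I : Type*} [LinearOrder I] [MeasurableSpace I] (ht : ∀ s : Set I, MeasurableSet s) (m : Measure I)
    [IsFiniteMeasure m]
    (h0 : ∀ i, m {i} = 0) (R : Set (I × I)) (hR : MeasurableSet R)
    (hR2 : ∀ i k, i ≠ k → ((i, k) ∈ R ↔ i < k)) (A : Set I) (hA : ∀ k ∈ A, m (A ∩ Iio k) = 0) : m A = 0 := by
  set mA := m.restrict A with hmA
  have hio : ∀ k ∈ A, mA (Iio k) = 0 := by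
    intro k hk; rw [hmA, Measure.restrict_apply (ht _), inter_comm]; exact hA k hk
  have h0' : ∀ i, mA {i} = 0 := fun i => le_antisymm ((Measure.restrict_apply_le _ _).trans (h0 i).le) zero_le
  have hz : (mA.prod mA) (Prod.swap ⁻¹' R) = 0 := by
    rw [Measure.measure_prod_null (measurable_swap hR)]
    have : ∀ᵐ k ∂mA, k ∈ A := ae_restrict_mem (ht A)
    filter_upwards [this] with k hk
    refine measure_mono_null (t := Iio k ∪ {k}) ?_ (measure_union_null (hio k hk) (h0' k))
    intro i hi
    by_cases hik : i = k
    · right; exact hik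
    · left; exact (hR2 i k hik).mp hi
  have hz2 : (mA.prod mA) R = 0 := by
    rw [← Measure.prod_swap, Measure.map_apply measurable_swap hR]; exact hz
  have hae := Measure.measure_ae_null_of_prod_null hz2
  by_contra hne
  have hnz : mA ≠ 0 := by
    intro h; rw [hmA, Measure.restrict_eq_zero] at h; exact hne h
  have : NeBot (ae mA) := ae_neBot.mpr hnz
  obtain ⟨i, hi, hiA⟩ := (hae.and (ae_restrict_mem (ht A))).exists
  apply hne
  have h1 : mA univ = 0 := by
    refine measure_mono_null (t := (Iio i ∪ {i}) ∪ (Prod.mk i ⁻¹' R)) ?_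
      (measure_union_null (measure_union_null (hio i hiA) (h0' i)) hi)
    intro k _
    rcases lt_trichotomy k i with h | h | h
    · left; left; exact h
    · left; right; exact h
    · right; exact (hR2 i k h.ne).mpr h
  rwa [hmA, Measure.restrict_apply_univ] at h1

lemma ulam {I : Type*} [LinearOrder I] [WellFoundedLT I] [MeasurableSpace I] (ht : ∀ s : Set I, MeasurableSet s)
    (m : Measure I) [IsFiniteMeasure m]
    (h0 : ∀ i, m {i} = 0) (R : Set (I × I)) (hR : MeasurableSet R)
    (hR2 : ∀ i k, i ≠ k → ((i, k) ∈ R ↔ i < k)) : m univ = 0 := by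
  have h1 : ∀ i, m (Iio i) = 0 := by
    intro i
    induction i using WellFoundedLT.induction with
    | _ i ih =>
      refine ulam_step ht m h0 R hR hR2 _ fun k hk => ?_
      exact measure_mono_null inter_subset_right (ih k hk)
  refine ulam_step ht m h0 R hR hR2 _ fun k _ => ?_
  exact measure_mono_null inter_subset_right (h1 k)

lemma ae_zero [MeasurableSpace H] [BorelSpace H] (ν : Measure H) [IsFiniteMeasure ν]
    {I : Type*} [LinearOrder I] [WellFoundedLT I] [MeasurableSpace I] (ht : ∀ s : Set I, MeasurableSet s)
    (e : I → H) (he : Orthonormal ℝ e) (h0 : ∀ i, ∀ᵐ x ∂ν, ⟪x, e i⟫ = 0)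
    (R : Set (I × I)) (hR : MeasurableSet R)
    (hR2 : ∀ i k, i ≠ k → ((i, k) ∈ R ↔ i < k)) : ∀ᵐ x ∂ν, ∀ i, ⟪x, e i⟫ = 0 := by
  let κ : H → Measure I := fun x => Measure.sum fun i => ENNReal.ofReal (⟪x, e i⟫^2) • Measure.dirac i
  have hκs : ∀ x s, κ x s = ∑' i, ENNReal.ofReal (⟪x, e i⟫^2) * s.indicator 1 i := by
    intro x s
    simp only [κ]
    rw [Measure.sum_apply _ (ht s)]
    refine tsum_congr fun i => ?_
    rw [Measure.smul_apply, Measure.dirac_apply' _ (ht s), smul_eq_mul]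
  have hκ : Measurable κ := by
    refine Measure.measurable_of_measurable_coe _ fun s _ => ?_
    simp_rw [hκs]
    apply LowerSemicontinuous.measurable
    refine lowerSemicontinuous_tsum fun i => ?_
    apply Continuous.lowerSemicontinuous
    by_cases hi : i ∈ s
    · simp only [indicator_of_mem hi, Pi.one_apply, mul_one]
      exact ENNReal.continuous_ofReal.comp (by fun_prop)
    · simp only [indicator_of_notMem hi, mul_zero]
      exact continuous_const
  have hκm : ∀ s, Measurable fun x => κ x s := fun s => (Measure.measurable_coe (ht s)).comp hκ
  have hκu : ∀ x, κ x univ = ∑' i, ENNReal.ofReal (⟪x, e i⟫^2) := by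
    intro x; rw [hκs]; simp
  have hball : ∀ N : ℕ, ∀ᵐ x ∂(ν.restrict (Metric.ball 0 N)), ∀ i, ⟪x, e i⟫ = 0 := by
    intro N
    set νN := ν.restrict (Metric.ball 0 N) with hνN
    let m := νN.bind κ
    have hm : ∀ s, m s = ∫⁻ x, κ x s ∂νN := fun s => Measure.bind_apply (ht s) hκ.aemeasurable
    have hfin : IsFiniteMeasure m := by
      constructor
      rw [hm]
      calc ∫⁻ x, κ x univ ∂νN ≤ ∫⁻ _x, ENNReal.ofReal ((N:ℝ)^2) ∂νN := by
            refine lintegral_mono_ae ?_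
            filter_upwards [ae_restrict_mem (Metric.isOpen_ball.measurableSet)] with x hx
            rw [hκu]
            have hxN : ‖x‖ ≤ N := by simpa using (mem_ball_zero_iff.mp hx).le
            have hb := he.tsum_inner_products_le (x := x)
            have hsb := he.inner_products_summable (x := x)
            have heq : ∀ i, ‖⟪e i, x⟫‖^2 = ⟪x, e i⟫^2 := by
              intro i; rw [real_inner_comm, Real.norm_eq_abs, sq_abs]
            simp_rw [heq] at hb hsb
            rw [← ENNReal.ofReal_tsum_of_nonneg (fun i => sq_nonneg _) hsb]
            exact ENNReal.ofReal_le_ofReal (hb.trans (by gcongr))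
        _ = ENNReal.ofReal ((N:ℝ)^2) * νN univ := by rw [lintegral_const]
        _ < ⊤ := ENNReal.mul_lt_top ENNReal.ofReal_lt_top (measure_lt_top _ _)
    have hm0 : ∀ i, m {i} = 0 := by
      intro i
      rw [hm]
      rw [lintegral_eq_zero_iff (hκm _)]
      filter_upwards [ae_restrict_of_ae (h0 i)] with x hx
      rw [hκs, Pi.zero_apply, ENNReal.tsum_eq_zero]
      intro k
      by_cases hk : k = i
      · rw [hk, hx]; simp
      · simp [hk]
    have := ulam ht m hm0 R hR hR2
    rw [hm, lintegral_eq_zero_iff (hκm _)] at this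
    filter_upwards [this] with x hx i
    rw [hκu, Pi.zero_apply, ENNReal.tsum_eq_zero] at hx
    have := hx i
    rw [ENNReal.ofReal_eq_zero] at this
    exact pow_eq_zero_iff (two_ne_zero) |>.mp (le_antisymm this (sq_nonneg _))
  have hu : ∀ᵐ x ∂(ν.restrict (⋃ N : ℕ, Metric.ball (0:H) N)), ∀ i, ⟪x, e i⟫ = 0 := by
    rw [ae_restrict_iUnion_iff]; exact hball
  rwa [Metric.iUnion_ball_nat, Measure.restrict_univ] at hu

end

section

variable {H : Type*} [NormedAddCommGroup H] [InnerProductSpace ℝ H]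

lemma design_vec {J : Type*} [DecidableEq J] [CompleteSpace H] (e : HilbertBasis J ℝ H) (o i k : J)
    (hoi : o ≠ i) (hok : o ≠ k) (hik : i ≠ k) (B : Finset J) (hoB : o ∉ B) (hiB : i ∉ B) (hkB : k ∉ B)
    (n : ℕ) (hn : 1 ≤ n) (x : Fin n → H)
    (hx : ∀ u w : H, ∑ l, ⟪x l, u⟫ * ⟪x l, w⟫ = ⟪e o + e i, u⟫ * ⟪e o + e i, w⟫ +
      ⟪e o + (2:ℝ) • e k, u⟫ * ⟪e o + (2:ℝ) • e k, w⟫ + 9 * ∑ b ∈ B, ⟪e b, u⟫ * ⟪e b, w⟫)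
    (j0 : ℕ) (h1 : B.card ≤ j0) (h2 : j0 ≤ B.card + 1) (v : H) (hv : ‖v‖ = 1)
    (hev : sampleCov x v = lam (sampleCov x) j0 • v) :
    ⟪e i, v⟫ ≠ 0 ∧ ⟪e k, v⟫ ≠ 0 ∧ ⟪e k, v⟫^2 - 6 * ⟪e i, v⟫ * ⟪e k, v⟫ - 4 * ⟪e i, v⟫^2 = 0 ∧
      ∀ j, j ≠ o → j ≠ i → j ≠ k → ⟪e j, v⟫ = 0 := by
  have hn0 : (0:ℝ) < n := by exact_mod_cast hn
  have hor : ∀ a b, ⟪e a, e b⟫ = if a = b then (1:ℝ) else 0 := fun a b =>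
    orthonormal_iff_ite.1 e.orthonormal a b
  set A := sampleCov x with hA
  have hAq : ∀ u w : H, n * ⟪A u, w⟫ = (⟪e o, u⟫ + ⟪e i, u⟫) * (⟪e o, w⟫ + ⟪e i, w⟫) +
      (⟪e o, u⟫ + 2 * ⟪e k, u⟫) * (⟪e o, w⟫ + 2 * ⟪e k, w⟫) + 9 * ∑ b ∈ B, ⟪e b, u⟫ * ⟪e b, w⟫ := by
    intro u w
    rw [hA, sampleCov_inner, mul_inv_cancel_left₀ hn0.ne', hx]
    simp only [inner_add_left, inner_smul_left]
    simp
  obtain ⟨F, hF, hFc⟩ := Finset.exists_subset_card_eq (s := insert i (insert k B)) (n := j0 + 1) (by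
    rw [Finset.card_insert_of_notMem (by simp [hik, hiB]), Finset.card_insert_of_notMem hkB]; omega)
  -- lower bound
  have hl : LinearIndependent ℝ fun a : F => e a :=
    e.orthonormal.linearIndependent.comp _ Subtype.val_injective
  have hd := finrank_span_eq_card hl
  rw [Fintype.card_coe, hFc] at hd
  have hlow : 1 / (n:ℝ) ≤ lam A j0 := by
    refine lam_ge A j0 _ hd _ ?_
    intro u hu hu1
    have h0 : ∀ a, a ∉ F → ⟪e a, u⟫ = 0 := by
      intro a ha
      clear hu1
      induction hu using Submodule.span_induction with
      | mem y hy =>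
        obtain ⟨c, rfl⟩ := hy
        exact e.orthonormal.2 (fun h => ha (h ▸ c.2))
      | zero => simp
      | add y z _ _ hy hz => rw [inner_add_right, hy, hz, add_zero]
      | smul t y _ hy => rw [inner_smul_right, hy, mul_zero]
    have h0' : ∀ a, a ∉ insert i (insert k B) → ⟪e a, u⟫ = 0 := fun a ha => h0 a (fun h => ha (hF h))
    have ho : ⟪e o, u⟫ = 0 := h0' o (by simp [hoi, hok, hoB])
    have hs : HasSum (fun a => ⟪e a, u⟫^2) (∑ a ∈ insert i (insert k B), ⟪e a, u⟫^2) :=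
      hasSum_sum_of_ne_finset_zero (fun a ha => by rw [h0' a ha]; ring)
    have hs2 := hs.unique (hb_norm_sq e u)
    rw [hu1, Finset.sum_insert (by simp [hik, hiB]), Finset.sum_insert hkB] at hs2
    have := hAq u u
    rw [ho] at this
    have hsq : ∑ b ∈ B, ⟪e b, u⟫ * ⟪e b, u⟫ = ∑ b ∈ B, ⟪e b, u⟫^2 :=
      Finset.sum_congr rfl fun b _ => (sq _).symm
    rw [hsq] at this
    have hnn : 0 ≤ ∑ b ∈ B, ⟪e b, u⟫^2 := Finset.sum_nonneg fun b _ => sq_nonneg _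
    rw [div_le_iff₀ hn0]
    nlinarith [sq_nonneg ⟪e k, u⟫, sq_nonneg ⟪e i, u⟫]
  have hup : lam A j0 ≤ 7 / n := by
    refine lam_le A j0 _ hd _ ?_
    intro V hV
    obtain ⟨u, hu, hu1, hup⟩ := unit_perp (κ := B) j0 (by rwa [Fintype.card_coe]) (fun b => e b) V hV
    refine ⟨u, hu, hu1, ?_⟩
    have hle := sum_le_hasSum ({o, i, k} : Finset J) (fun a _ => sq_nonneg ⟪e a, u⟫) (hb_norm_sq e u)
    rw [Finset.sum_insert (by simp [hoi, hok]), Finset.sum_insert (by simp [hik]), Finset.sum_singleton, hu1] at hle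
    have := hAq u u
    rw [Finset.sum_eq_zero (fun b hb => by rw [hup ⟨b, hb⟩, mul_zero])] at this
    rw [le_div_iff₀ hn0]
    nlinarith [sq_nonneg (⟪e o, u⟫ - ⟪e i, u⟫), sq_nonneg (2*⟪e o, u⟫ - ⟪e k, u⟫), sq_nonneg ⟪e i, u⟫, sq_nonneg ⟪e k, u⟫, sq_nonneg ⟪e o, u⟫]
  set L := n * lam A j0 with hL
  have hL1 : 1 ≤ L := by rw [hL, mul_comm]; exact (div_le_iff₀ hn0).mp hlow
  have hL7 : L ≤ 7 := by rw [hL, mul_comm]; exact (le_div_iff₀ hn0).mp hup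
  have hq : ∀ w, L * ⟪w, v⟫ = (⟪e o, v⟫ + ⟪e i, v⟫) * (⟪e o, w⟫ + ⟪e i, w⟫) +
      (⟪e o, v⟫ + 2 * ⟪e k, v⟫) * (⟪e o, w⟫ + 2 * ⟪e k, w⟫) + 9 * ∑ b ∈ B, ⟪e b, v⟫ * ⟪e b, w⟫ := by
    intro w
    rw [← hAq, hev, inner_smul_left, real_inner_comm v w]
    simp [hL]; ring
  have qo := hq (e o)
  have qi := hq (e i)
  have qk := hq (e k)
  have hB0 : ∀ c, c ∉ B → ∑ b ∈ B, ⟪e b, v⟫ * ⟪e b, e c⟫ = 0 := fun c hc =>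
    Finset.sum_eq_zero fun b hb => by
      have hne : b ≠ c := fun h => hc (h ▸ hb)
      rw [hor, if_neg hne, mul_zero]
  rw [hB0 o hoB] at qo
  rw [hB0 i hiB] at qi
  rw [hB0 k hkB] at qk
  simp only [hor, if_neg hoi, if_neg hoi.symm, if_neg hok, if_neg hok.symm, if_neg hik, if_neg hik.symm, if_true] at qo qi qk
  have hoth : ∀ j, j ≠ o → j ≠ i → j ≠ k → ⟪e j, v⟫ = 0 := by
    intro j hjo hji hjk
    have qj := hq (e j)
    simp only [hor, if_neg hjo.symm, if_neg hji.symm, if_neg hjk.symm] at qj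
    by_cases hjB : j ∈ B
    · have : ∑ b ∈ B, ⟪e b, v⟫ * (if b = j then (1:ℝ) else 0) = ⟪e j, v⟫ := by
        rw [Finset.sum_eq_single j]
        · simp
        · intro b _ hb; simp [hb]
        · intro h; exact absurd hjB h
      rw [this] at qj
      have : (L - 9) * ⟪e j, v⟫ = 0 := by linarith
      rcases mul_eq_zero.mp this with h | h
      · linarith
      · exact h
    · have := hB0 j hjB
      simp only [hor] at this
      rw [this] at qj
      have : L * ⟪e j, v⟫ = 0 := by linarith
      rcases mul_eq_zero.mp this with h | h
      · linarith
      · exact h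
  set t := ⟪e o, v⟫
  set p := ⟪e i, v⟫
  set q := ⟪e k, v⟫
  have hLne : L ≠ 0 := by linarith
  have e1 : L * (L * p) = 2 * (L * p) + (L * q) / 2 := by linear_combination L * qi + qo - qi - qk / 2
  have e2 : L * (L * q) / 2 = L * p + 5 * (L * q) / 2 := by linear_combination L * qk / 2 + qo - qi - qk / 2
  have hnz : ¬ (t = 0 ∧ p = 0 ∧ q = 0) := by
    rintro ⟨a1, a2, a3⟩
    have : v = 0 := hb_ext e _ _ fun j => by
      rw [inner_zero_right]
      by_cases hjo : j = o
      · rw [hjo]; exact a1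
      by_cases hji : j = i
      · rw [hji]; exact a2
      by_cases hjk : j = k
      · rw [hjk]; exact a3
      exact hoth j hjo hji hjk
    rw [this] at hv; simp at hv
  refine ⟨?_, ?_, ?_, hoth⟩
  · intro hp
    have ht : t = 0 := by rw [hp] at qi; linarith
    rw [hp] at e1
    have h3 : L * q = 0 := by linarith
    exact hnz ⟨ht, hp, (mul_eq_zero.mp h3).resolve_left hLne⟩
  · intro hp
    have ht : t = 0 := by rw [hp] at qk; linarith
    rw [hp] at e2
    have h3 : L * p = 0 := by linarith
    exact hnz ⟨ht, (mul_eq_zero.mp h3).resolve_left hLne, hp⟩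
  · have h4 : L ^ 2 * (q^2 - 6 * p * q - 4 * p^2) = 0 := by
      linear_combination (-4) * ((L * q / 2) * e1 - (L * p) * e2)
    exact (mul_eq_zero.mp h4).resolve_left (pow_ne_zero 2 hLne)

end

section

variable {H : Type*} [NormedAddCommGroup H] [InnerProductSpace ℝ H]

lemma ae_null {J : Type*} [DecidableEq J] [CompleteSpace H] [MeasurableSpace H] [BorelSpace H]
    {ν : Measure H} {T : H →L[ℝ] H} (hν : IsGaussian ν T)
    (e : HilbertBasis J ℝ H) (ev : J → ℝ) (hT : ∀ i, T (e i) = ev i • e i) (o : J) (ho : 0 < ev o)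
    (n : ℕ) (est : (Fin n → H) → H) (hm : Measurable est) (B : Finset J) (hoB : o ∉ B)
    (hB : ∀ b ∈ B, ev b ≠ 0) (hBn : B.card + 2 ≤ n) (j0 : ℕ) (h1 : B.card ≤ j0) (h2 : j0 ≤ B.card + 1)
    (hest : ∀ x, ‖est x‖ = 1 ∧ sampleCov x (est x) = lam (sampleCov x) j0 • est x) :
    ∀ᵐ x ∂ν, ∀ j, ev j = 0 → ⟪x, e j⟫ = 0 := by
  have hp := hν.1
  let I := {j : J // ev j = 0}
  obtain ⟨lo, wf⟩ := exists_wellFoundedLT I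
  let _ : MeasurableSpace I := ⊤
  have hc : Fintype.card (Bool ⊕ B) ≤ Fintype.card (Fin n) := by
    simp; omega
  obtain ⟨ι⟩ := Function.Embedding.nonempty_of_card_le hc
  let d : I × I → Bool ⊕ B → H := fun z c => match c with
    | Sum.inl true => e o + e z.1.1
    | Sum.inl false => e o + (2:ℝ) • e z.2.1
    | Sum.inr b => (3:ℝ) • e b.1
  let D : I × I → Fin n → H := fun z => Function.extend ι (d z) 0
  have hD : Measurable D := by
    rw [measurable_pi_iff]
    intro l
    by_cases hl : ∃ c, ι c = l
    · obtain ⟨c, rfl⟩ := hl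
      have : (fun z => D z (ι c)) = fun z => d z c := by
        funext z; exact ι.injective.extend_apply _ _ _
      rw [this]
      rcases c with (_ | _) | b
      · exact (measurable_from_top (f := fun k : I => e o + (2:ℝ) • e k.1)).comp measurable_snd
      · exact (measurable_from_top (f := fun k : I => e o + e k.1)).comp measurable_fst
      · exact measurable_const
    · have : (fun z => D z l) = fun z => 0 := by
        funext z; exact Function.extend_apply' _ _ _ hl
      rw [this]; exact measurable_const
  have hDs : ∀ z, ∀ u w : H, ∑ l, ⟪D z l, u⟫ * ⟪D z l, w⟫ = ⟪e o + e z.1.1, u⟫ * ⟪e o + e z.1.1, w⟫ +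
      ⟪e o + (2:ℝ) • e z.2.1, u⟫ * ⟪e o + (2:ℝ) • e z.2.1, w⟫ + 9 * ∑ b ∈ B, ⟪e b, u⟫ * ⟪e b, w⟫ := by
    intro z u w
    rw [← Fintype.sum_of_injective ι ι.injective (fun c => ⟪d z c, u⟫ * ⟪d z c, w⟫)]
    · rw [Fintype.sum_sum_type, Fintype.sum_bool]
      congr 1
      rw [← Finset.sum_coe_sort B, Finset.mul_sum]
      refine Finset.sum_congr rfl fun b _ => ?_
      simp only [d, inner_smul_left]
      simp; ring
    · intro l hl
      have : D z l = 0 := Function.extend_apply' _ _ _ (by simpa using hl)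
      rw [this]; simp
    · intro c
      have : D z (ι c) = d z c := ι.injective.extend_apply _ _ _
      rw [this]
  have hneo : ∀ i : I, o ≠ i.1 := fun i h => by
    have := i.2; rw [← h] at this; exact ho.ne' this
  have hnB : ∀ i : I, i.1 ∉ B := fun i h => hB _ h i.2
  have key : ∀ i k : I, i ≠ k → ⟪e i.1, est (D (i,k))⟫ ≠ 0 ∧ ⟪e k.1, est (D (i,k))⟫ ≠ 0 ∧
      ⟪e k.1, est (D (i,k))⟫^2 - 6 * ⟪e i.1, est (D (i,k))⟫ * ⟪e k.1, est (D (i,k))⟫ - 4 * ⟪e i.1, est (D (i,k))⟫^2 = 0 ∧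
      ∀ j, j ≠ o → j ≠ i.1 → j ≠ k.1 → ⟪e j, est (D (i,k))⟫ = 0 := by
    intro i k hik
    exact design_vec e o i.1 k.1 (hneo i) (hneo k) (fun h => hik (Subtype.ext h)) B hoB (hnB i) (hnB k) n (by omega)
      (D (i,k)) (hDs (i,k)) j0 h1 h2 _ (hest _).1 (hest _).2
  let U : I → I → Set H := fun i k => {v | ⟪e i.1, v⟫ * ⟪e k.1, v⟫ ≠ 0 ∧
    |⟪e k.1, v⟫^2 - 6 * ⟪e i.1, v⟫ * ⟪e k.1, v⟫ - 4 * ⟪e i.1, v⟫^2| <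
    |⟪e i.1, v⟫^2 - 6 * ⟪e i.1, v⟫ * ⟪e k.1, v⟫ - 4 * ⟪e k.1, v⟫^2|}
  have hU : ∀ i k, IsOpen (U i k) := by
    intro i k
    have o1 : IsOpen {v : H | ⟪e i.1, v⟫ * ⟪e k.1, v⟫ ≠ 0} := isOpen_ne_fun (by fun_prop) continuous_const
    have o2 : IsOpen {v : H | |⟪e k.1, v⟫^2 - 6 * ⟪e i.1, v⟫ * ⟪e k.1, v⟫ - 4 * ⟪e i.1, v⟫^2| <
        |⟪e i.1, v⟫^2 - 6 * ⟪e i.1, v⟫ * ⟪e k.1, v⟫ - 4 * ⟪e k.1, v⟫^2|} :=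
      isOpen_lt (by fun_prop) (by fun_prop)
    exact o1.inter o2
  let Aset : Set H := ⋃ i, ⋃ k, ⋃ (_ : i < k), U i k
  have hAo : IsOpen Aset := isOpen_iUnion fun i => isOpen_iUnion fun k => isOpen_iUnion fun _ => hU i k
  have hmain := ae_zero ν (I := I) (fun s => trivial) (fun i => e i.1)
    (e.orthonormal.comp _ Subtype.val_injective) ?_ {z | est (D z) ∈ Aset} ((hm.comp hD) hAo.measurableSet) ?_
  · filter_upwards [hmain] with x hx j hj using hx ⟨j, hj⟩
  · intro i
    have hg := hν.2 (e i.1)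
    rw [hT, i.2] at hg
    simp only [zero_smul, inner_zero_left, Real.toNNReal_zero, gaussianReal_zero_var] at hg
    have h3 : ∀ᵐ y ∂(ν.map fun x => ⟪x, e i.1⟫), y = 0 := by
      rw [hg]; exact (ae_dirac_iff (measurableSet_singleton 0)).2 rfl
    exact ae_of_ae_map (by fun_prop) h3
  · intro i k hik
    obtain ⟨k1, k2, k3, k4⟩ := key i k hik
    have hin : ∀ j : I, ⟪e j.1, est (D (i,k))⟫ ≠ 0 → j = i ∨ j = k := by
      intro j hj
      by_contra hh
      push Not at hh
      exact hj (k4 j.1 (hneo j).symm (fun h => hh.1 (Subtype.ext h)) (fun h => hh.2 (Subtype.ext h)))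
    constructor
    · intro h
      simp only [mem_ofPred_eq, Aset, mem_iUnion] at h
      obtain ⟨i', k', hlt, hz, hl⟩ := h
      rcases hin i' (left_ne_zero_of_mul hz) with rfl | rfl <;> rcases hin k' (right_ne_zero_of_mul hz) with rfl | rfl
      · exact absurd hlt (lt_irrefl _)
      · exact hlt
      · exfalso
        rw [mul_right_comm] at k3
        rw [k3, abs_zero] at hl
        exact absurd hl (not_lt.2 (abs_nonneg _))
      · exact absurd hlt (lt_irrefl _)
    · intro hlt
      simp only [mem_ofPred_eq, Aset, mem_iUnion]
      refine ⟨i, k, hlt, mul_ne_zero k1 k2, ?_⟩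
      rw [k3, abs_zero, abs_pos]
      intro h5
      have h6 : 0 < ⟪e i.1, est (D (i,k))⟫^2 := by positivity
      have h7 : ⟪e k.1, est (D (i,k))⟫^2 = ⟪e i.1, est (D (i,k))⟫^2 := by linarith
      have h8 : ⟪e i.1, est (D (i,k))⟫ * ⟪e k.1, est (D (i,k))⟫ = -(⟪e i.1, est (D (i,k))⟫^2) / 2 := by linarith
      have h9 : (⟪e i.1, est (D (i,k))⟫ * ⟪e k.1, est (D (i,k))⟫)^2 =
        ⟪e i.1, est (D (i,k))⟫^2 * ⟪e k.1, est (D (i,k))⟫^2 := by ring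
      rw [h8, h7] at h9
      nlinarith

end

section

variable {H : Type*} [NormedAddCommGroup H] [InnerProductSpace ℝ H]

lemma caseB {J : Type*} [DecidableEq J] [CompleteSpace H] [MeasurableSpace H] [BorelSpace H]
    {ν : Measure H} {T : H →L[ℝ] H}
    (hν : IsGaussian ν T) (n : ℕ) (hn : 1 ≤ n) (e : HilbertBasis J ℝ H) (ev : J → ℝ)
    (hs : ∀ x y, ⟪T x, y⟫ = ⟪x, T y⟫)
    (hT : ∀ i, T (e i) = ev i • e i) (hev : ∀ i, 0 ≤ ev i)
    (B : ℝ) (hB : 0 < B) (hevB : ∀ i, ev i ≤ B) (hsum : Summable ev) (o : J) (ho : 0 < ev o)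
    (R : ℝ) (hR : (∑' j, ev j) / B = R) (hR1 : 1 ≤ R) (hRn : R ≤ n)
    (g : ℝ) (hg : 0 < g) (hgap : ∀ j, j ≠ o → g ≤ |ev o - ev j|)
    (est : (Fin n → H) → H) (hm : Measurable est) (j0 : ℕ) (hlam : lam T j0 = ev o)
    (hest : ∀ x, ‖est x‖ = 1 ∧ sampleCov x (est x) = lam (sampleCov x) j0 • est x)
    (hnull : ∀ᵐ x ∂ν, ∀ j, ev j = 0 → ⟪x, e j⟫ = 0) :
    |(∫ x, ⟪est x, e o⟫^2 ∂(Measure.pi fun _ : Fin n => ν)) - 1 +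
      (n:ℝ)⁻¹ * ∑' j, (if j = o then 0 else (ev o - ev j)⁻¹^2 * (ev j * ev o))| ≤
      32 * (300 * Real.exp 10)^3 * (B^3/g^3) * Real.sqrt (R/n)^3 := by
  have hp := hν.1
  obtain ⟨W, hWm, hWi, hWx⟩ := D_final hν n hn e ev hs hT hev B hB hevB hsum o ho R hR hR1 hRn
  obtain ⟨Z, hZi, hZe, hZx⟩ := Z_final hν n hn e ev hT hev hsum o g hg hgap
  set P := Measure.pi fun _ : Fin n => ν with hP
  have hnull' : ∀ᵐ x ∂P, ∀ k j, ev j = 0 → ⟪x k, e j⟫ = 0 := by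
    rw [ae_all_iff]
    intro k
    exact (measurePreserving_eval (fun _ : Fin n => ν) k).quasiMeasurePreserving.ae hnull
  have hint : Integrable (fun x => ⟪est x, e o⟫^2) P := by
    refine Integrable.of_bound (C := 1) ?_ (Eventually.of_forall fun x => ?_)
    · have : Measurable fun v : H => ⟪v, e o⟫ := by fun_prop
      exact ((this.comp hm).pow_const 2).aestronglyMeasurable
    · have h1 := abs_real_inner_le_norm (est x) (e o)
      rw [(hest x).1, e.orthonormal.1 o, mul_one] at h1
      rw [Real.norm_eq_abs, abs_pow]
      exact pow_le_one₀ (abs_nonneg _) h1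
  have heq : (∫ x, ⟪est x, e o⟫^2 ∂P) - 1 +
      (n:ℝ)⁻¹ * ∑' j, (if j = o then 0 else (ev o - ev j)⁻¹^2 * (ev j * ev o)) =
      ∫ x, (⟪est x, e o⟫^2 - 1 + Z x) ∂P := by
    have i1 : Integrable (fun x => ⟪est x, e o⟫^2 - 1) P := hint.sub (integrable_const 1)
    rw [← hZe, integral_add i1 hZi, integral_sub hint (integrable_const 1)]
    simp
  rw [heq, ← Real.norm_eq_abs]
  refine (norm_integral_le_lintegral_norm _).trans ?_
  refine ENNReal.toReal_le_of_le_ofReal (by positivity) ?_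
  calc ∫⁻ x, ENNReal.ofReal ‖⟪est x, e o⟫^2 - 1 + Z x‖ ∂P
      ≤ ∫⁻ x, ENNReal.ofReal (16/g^3) * W x ∂P := by
        refine lintegral_mono_ae ?_
        filter_upwards [hnull'] with x hx
        refine le_trans ?_ (mul_le_mul_right (hWx x hx) _)
        rw [← ENNReal.ofReal_mul (by positivity)]
        refine ENNReal.ofReal_le_ofReal ?_
        rw [← hZx x hx, Real.norm_eq_abs]
        refine (perturb e ev o T (sampleCov x) hs hT g hg hgap (est x) (hest x).1 _ (hest x).2 ?_).trans_eq (by ring)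
        rw [← hlam]; exact weyl _ _ _
    _ = ENNReal.ofReal (16/g^3) * ∫⁻ x, W x ∂P := lintegral_const_mul _ hWm
    _ ≤ ENNReal.ofReal (16/g^3) * ENNReal.ofReal (2 * (300 * Real.exp 10 * B * Real.sqrt (R / n))^3) :=
        mul_le_mul_right hWi _
    _ = _ := by
        rw [← ENNReal.ofReal_mul (by positivity)]
        congr 1; ring

end

section

variable {H : Type*} [NormedAddCommGroup H] [InnerProductSpace ℝ H]

lemma diag_norm {J : Type*} [CompleteSpace H] (e : HilbertBasis J ℝ H) (T : H →L[ℝ] H)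
    (hs : ∀ x y : H, ⟪T x, y⟫ = ⟪x, T y⟫) (ev : J → ℝ) (hT : ∀ i, T (e i) = ev i • e i)
    (hev : ∀ j, 0 ≤ ev j) (hsum : Summable ev) : (∀ i, ev i ≤ ‖T‖) ∧ ‖T‖ ≤ ∑' j, ev j := by
  constructor
  · intro i
    have h := T.le_opNorm (e i)
    rw [hT, norm_smul, e.orthonormal.1 i, mul_one, mul_one, Real.norm_eq_abs] at h
    exact (le_abs_self _).trans h
  · have ht : 0 ≤ ∑' j, ev j := tsum_nonneg hev
    refine T.opNorm_le_bound ht fun x => ?_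
    have h1 := hb_norm_sq e (T x)
    have h2 := (hb_norm_sq e x).mul_left ((∑' j, ev j)^2)
    have h3 := hasSum_le (fun j => ?_) h1 h2
    · rw [← mul_pow] at h3
      exact le_of_sq_le_sq h3 (by positivity)
    · rw [← hs, hT, inner_smul_left, mul_pow]
      have : ev j ≤ ∑' j, ev j := hsum.le_tsum j (fun i _ => hev i)
      simp only [conj_trivial]
      gcongr
      exact hev j

lemma main_bound [CompleteSpace H] [MeasurableSpace H] [BorelSpace H]
    (S : CovOp H) (r : ℕ) (θ : H) (ν : Measure H) (n : ℕ)
    (est : (Fin n → H) → H) (hθ : S.SimpleVec r θ) (hν : IsGaussian ν S.toCLM)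
    (hsel : eigSel S r θ est) (hm : Measurable est) (hn : 1 ≤ n) :
    |biasParam ν θ est + S.Ar r / (2 * n)| ≤
            (32 * (300 * Real.exp 10)^3 + 2) * (‖S.toCLM‖ ^ 3 / S.g r ^ 3) *
              max (Real.sqrt (S.effRank / n)) (S.effRank / n) ^ 3 := by
  classical
  have hp := hν.1
  have hn0 : (0:ℝ) < n := by exact_mod_cast hn
  obtain ⟨w, e, ev, o, hs, hT, hev, hsum, htr, hoθ, hoμ, hne, hAr⟩ := bridge S r θ hθ
  have hAr := hAr
  have ho : 0 < ev o := by rw [hoμ]; exact S.μ_pos r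
  obtain ⟨g1, g2⟩ := gap_facts e S.toCLM hs ev hT hev hsum o ho hne
  have hgdef : S.g r = Metric.infDist (ev o) (spectrum ℝ S.toCLM \ {ev o}) := by
    rw [hoμ]; rfl
  rw [← hgdef] at g1 g2
  have hg0 : 0 ≤ S.g r := Metric.infDist_nonneg
  obtain ⟨hevN, hNtr⟩ := diag_norm e S.toCLM hs ev hT hev hsum
  have hLHS : biasParam ν θ est + S.Ar r / (2 * n) =
      (∫ x, ⟪est x, e o⟫^2 ∂(Measure.pi fun _ : Fin n => ν)) - 1 +
      (n:ℝ)⁻¹ * ∑' j, (if j = o then 0 else (ev o - ev j)⁻¹^2 * (ev j * ev o)) := by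
    rw [← hAr, biasParam]
    simp only [hoθ]
    congr 1
    field_simp
  rw [hLHS]
  clear hLHS hAr
  set T := S.toCLM with hTdef
  set g := S.g r with hgg
  set N := ‖T‖ with hN
  have hN0 : 0 < N := ho.trans_le (hevN o)
  have hRdef : (∑' j, ev j) / N = S.effRank := by rw [htr]; rfl
  set R := S.effRank with hR
  have hR1 : 1 ≤ R := by rw [← hRdef, le_div_iff₀ hN0, one_mul]; exact hNtr
  have hmax : Real.sqrt (R/n)^3 ≤ max (Real.sqrt (R / n)) (R / n) ^ 3 :=
    pow_le_pow_left₀ (Real.sqrt_nonneg _) (le_max_left _ _) 3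
  have hmax0 : 0 ≤ max (Real.sqrt (R / n)) (R / n) := (Real.sqrt_nonneg _).trans (le_max_left _ _)
  by_cases hex : ∃ j, j ≠ o
  swap
  · push Not at hex
    have h1 : ∀ x, ⟪est x, e o⟫^2 = 1 := by
      intro x
      have := (hb_norm_sq e (est x)).unique (hasSum_single o fun b hb => absurd (hex b) hb)
      rw [real_inner_comm, ← this, (hsel x).1, one_pow]
    have h2 : ∑' j, (if j = o then 0 else (ev o - ev j)⁻¹^2 * (ev j * ev o)) = 0 := by
      rw [tsum_congr (fun j => if_pos (hex j)), tsum_zero]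
    rw [h2]
    simp only [h1]
    simp
    positivity
  have hg := g2 hex
  obtain ⟨j1, hj1⟩ := hex
  have hgN : g ≤ N := by
    refine (g1 j1 hj1).trans ?_
    rw [abs_le]
    have a1 := hev j1
    have a2 := hevN j1
    have a3 := hevN o
    constructor <;> linarith
  obtain ⟨big, hbig, hlam, ⟨V, hV⟩, huniq⟩ := lam_diag e T hs ev hT hsum o ho g hg g1
  have hest : ∀ x, ‖est x‖ = 1 ∧ sampleCov x (est x) = lam (sampleCov x) big.card • est x := by
    intro x
    refine ⟨(hsel x).1, ?_⟩
    obtain ⟨v, hv1, hv2⟩ := eig_exists x big.card V hV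
    obtain ⟨j, hj, hj2⟩ := (hsel x).2.2 ⟨v, hv1, big.card, by rw [hoμ] at hlam; exact hlam, hv2⟩
    have : j = big.card := huniq j (by rw [hoμ]; exact hj)
    rw [this] at hj2; exact hj2
  set Q := ∑' j, (if j = o then 0 else (ev o - ev j)⁻¹^2 * (ev j * ev o)) with hQ
  set X := R / n with hX
  have hX0 : 0 < X := by positivity
  have hNg : 1 ≤ N / g := (one_le_div hg).2 hgN
  by_cases hK : 1 ≤ (N/g)^2 * X
  · -- trivial regime
    have hterm0 : ∀ j, 0 ≤ (if j = o then 0 else (ev o - ev j)⁻¹^2 * (ev j * ev o)) := by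
      intro j
      have := hev j
      split_ifs <;> positivity
    have hterm : ∀ j, (if j = o then 0 else (ev o - ev j)⁻¹^2 * (ev j * ev o)) ≤ g⁻¹^2 * N * ev j := by
      intro j
      have hj0 := hev j
      split_ifs with h
      · positivity
      · have c1 : (ev o - ev j)⁻¹^2 ≤ g⁻¹^2 := by
          rw [← sq_abs, abs_inv]
          gcongr
          exact g1 j h
        have c2 : ev j * ev o ≤ ev j * N := by gcongr; exact hevN o
        calc _ ≤ g⁻¹^2 * (ev j * N) := by gcongr
          _ = _ := by ring
    have hs2 : Summable fun j => g⁻¹^2 * N * ev j := hsum.mul_left _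
    have hQ0 : 0 ≤ Q := tsum_nonneg hterm0
    have hQ1 : Q ≤ g⁻¹^2 * N * (N * R) := by
      have : N * R = ∑' j, ev j := by rw [← hRdef]; field_simp
      rw [this, ← tsum_mul_left]
      exact (Summable.of_nonneg_of_le hterm0 hterm hs2).tsum_le_tsum hterm hs2
    have hQ2 : (n:ℝ)⁻¹ * Q ≤ (N/g)^2 * X := by
      calc (n:ℝ)⁻¹ * Q ≤ (n:ℝ)⁻¹ * (g⁻¹^2 * N * (N * R)) := by gcongr
        _ = _ := by rw [hX]; field_simp
    have hb0 : ∀ x, 0 ≤ ⟪est x, e o⟫^2 := fun x => sq_nonneg _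
    have hb1 : ∀ x, ⟪est x, e o⟫^2 ≤ 1 := by
      intro x
      have h1 := abs_real_inner_le_norm (est x) (e o)
      rw [(hest x).1, e.orthonormal.1 o, mul_one] at h1
      rw [← sq_abs]
      exact pow_le_one₀ (abs_nonneg _) h1
    set bb := ∫ x, ⟪est x, e o⟫^2 ∂(Measure.pi fun _ : Fin n => ν) with hbb
    have hbb0 : 0 ≤ bb := integral_nonneg hb0
    have hbb1 : bb ≤ 1 := by
      have := integral_mono_of_nonneg (μ := Measure.pi fun _ : Fin n => ν) (Eventually.of_forall hb0) (integrable_const (1:ℝ)) (Eventually.of_forall hb1)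
      simpa using this
    have hq0 : 0 ≤ (n:ℝ)⁻¹ * Q := by positivity
    set K := (N/g) * Real.sqrt X with hKdef
    have hK2 : K^2 = (N/g)^2 * X := by rw [hKdef, mul_pow, Real.sq_sqrt hX0.le]
    have hK0 : 0 ≤ K := by positivity
    rw [← hK2] at hK hQ2
    have hK1 : 1 ≤ K := by nlinarith
    have hK3 : K^2 ≤ K^3 := pow_le_pow_right₀ hK1 (by norm_num)
    have step : |bb - 1 + (n:ℝ)⁻¹ * Q| ≤ 2 * K^3 := by
      rw [abs_le]; constructor <;> linarith
    refine step.trans ?_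
    calc 2 * K^3 = 2 * (N^3/g^3) * Real.sqrt X^3 := by rw [hKdef]; ring
      _ ≤ _ := by
        gcongr
        have : 0 ≤ 32 * (300 * Real.exp 10)^3 := by positivity
        linarith
  · push Not at hK
    have hX1 : X < 1 := by
      have : (1:ℝ) ≤ (N/g)^2 := one_le_pow₀ hNg
      nlinarith
    have hRn : R < n := by rwa [hX, div_lt_one hn0] at hX1
    have hn2 : 2 ≤ n := by
      have : (1:ℝ) < n := hR1.trans_lt hRn
      have : 1 < n := by exact_mod_cast this
      omega
    have hcard : big.card < n := by
      by_contra hcon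
      push Not at hcon
      have h1 : ∑ j ∈ big, ev j ≤ ∑' j, ev j := hsum.sum_le_tsum big (fun j _ => hev j)
      have h2 : big.card • g ≤ ∑ j ∈ big, ev j := by
        refine Finset.card_nsmul_le_sum _ _ _ fun j hj => ?_
        have hj' := (hbig j).1 hj
        have := g1 j (fun h => by rw [h] at hj'; exact lt_irrefl _ hj')
        rw [abs_of_neg (by linarith)] at this
        linarith
      rw [nsmul_eq_mul] at h2
      have h3 : (n:ℝ) ≤ big.card := by exact_mod_cast hcon
      have h4 : n * g ≤ N * R := by
        have : N * R = ∑' j, ev j := by rw [← hRdef]; field_simp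
        rw [this]
        nlinarith
      have h5 : 1 ≤ N / g * X := by
        rw [hX, div_mul_div_comm, le_div_iff₀ (by positivity)]
        linarith
      nlinarith
    obtain ⟨B, hBs, hBc⟩ := Finset.exists_subset_card_eq (s := big) (n := big.card - 1) (by omega)
    have hnull := ae_null hν e ev hT o ho n est hm B
      (fun h => lt_irrefl _ ((hbig o).1 (hBs h)))
      (fun b hb => (ho.trans ((hbig b).1 (hBs hb))).ne') (by omega) big.card (by omega) (by omega) hest
    have := caseB hν n hn e ev hs hT hev N hN0 hevN hsum o ho R hRdef hR1 hRn.le g hg g1 est hm big.card hlam hest hnull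
    refine this.trans ?_
    gcongr
    linarith

end

/-- **Lemma 4.10.** `b_r(Σ) = -A_r(Σ)/(2n) + β_r` with
`|β_r| ≤ C (‖Σ‖³/g_r³)(√(r(Σ)/n) ∨ r(Σ)/n)³`. -/
theorem stmt14 :
    ∃ C : ℝ, 0 < C ∧
      ∀ (H : Type) (_ : NormedAddCommGroup H),
        ∀ (_ : InnerProductSpace ℝ H) (_ : CompleteSpace H)
          (_ : MeasurableSpace H) (_ : BorelSpace H)
          (S : CovOp H) (r : ℕ) (θ : H) (ν : Measure H) (n : ℕ)
          (est : (Fin n → H) → H),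
          S.SimpleVec r θ → IsGaussian ν S.toCLM → eigSel S r θ est →
          Measurable est → 1 ≤ n →
          |biasParam ν θ est + S.Ar r / (2 * n)| ≤
            C * (‖S.toCLM‖ ^ 3 / S.g r ^ 3) *
              max (Real.sqrt (S.effRank / n)) (S.effRank / n) ^ 3 := by
  refine ⟨32 * (300 * Real.exp 10)^3 + 2, by positivity, ?_⟩
  intro H _ _ _ _ _ S r θ ν n est hθ hν hsel hm hn
  exact main_bound S r θ ν n est hθ hν hsel hm hn

end KLN
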